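/- There exists a constant C > 0, depending only on Ω, ω₀, ω and η⁰, such that for every T > 0, every bounded measurable potential a, and every classical nonnegative solution q of the adjoint heat equation with Neumann boundary condition, one has ∫_Ω q(0,x)² dx ≤ exp(C(1 + 1/T + T‖a‖_∞ + ‖a‖_∞^{1/2})) (∫₀^T ∫_ω q(t,x) dx dt)². -/

import Mathlib

open MeasureTheory Real Set RealInnerProductSpace

noncomputable def spaceLaplacian {N : ℕ} (f : EuclideanSpace ℝ (Fin N) → ℝ)
    (x : EuclideanSpace ℝ (Fin N)) : ℝ :=
  ∑ i : Fin N, fderiv ℝ (fun y => fderiv ℝ f y (EuclideanSpace.single i 1)) x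
    (EuclideanSpace.single i 1)

/-!
Testing the equation against `exp (μ * η)` gives the estimate by the observation in `L¹`. Outside
`ω`, where `∇ η` does not vanish, the Laplacian of this weight dominates `(A + σ) exp (μ * η)` for
large `μ`, and the boundary term has the right sign because `η` decreases towards `∂Ω`. Hence the
weighted mass of `q` decays at the rate `σ`, up to an error controlled by the integral of `q` over
`ω`, whereas its plain mass decays at the rate `A` at most. With `σ` large enough this bounds the
mass at time `t₀` by the integral of `q` over `(0, T) × ω`.

The passage from `L¹` to `L²` between the times `0` and `t₀ = min 1 (T / 2)` is the smoothing effect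
of the heat equation, obtained from the energy inequality and a Nash inequality on `Ω`, which holds
because `Ω` has the uniform cone property. Integration by parts is needed only in the form of a
one-sided inequality for fields pointing into `Ω`, for which cutoffs of the form `χ (η / ε)`
suffice.
-/

section

open Filter Topology Gradient Metric

section C1On

variable {E G : Type*} [NormedAddCommGroup E] [NormedSpace ℝ E] [NormedAddCommGroup G]
  [NormedSpace ℝ G] {F F₁ F₂ : E → G} {u : E → ℝ} {s t : Set E}

/-- `C1On F s`: the function `F` is differentiable in the full (two-sided) sense at every point of
`s`, also at those of the boundary, and its derivative is continuous on `s`. This is how functions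
of class `C¹` up to the boundary of a domain are encoded. -/
structure C1On (F : E → G) (s : Set E) : Prop where
  differentiableAt : ∀ x ∈ s, DifferentiableAt ℝ F x
  continuousOn_fderiv : ContinuousOn (fderiv ℝ F) s

namespace C1On

theorem of_contDiff (hF : ContDiff ℝ 1 F) (s : Set E) : C1On F s :=
  ⟨fun x _ => hF.differentiable one_ne_zero x, (hF.continuous_fderiv one_ne_zero).continuousOn⟩

theorem continuousOn (hF : C1On F s) : ContinuousOn F s := fun x hx =>
  (hF.differentiableAt x hx).continuousAt.continuousWithinAt

theorem mono (hF : C1On F t) (hst : s ⊆ t) : C1On F s :=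
  ⟨fun x hx => hF.differentiableAt x (hst hx), hF.continuousOn_fderiv.mono hst⟩

theorem add (hF₁ : C1On F₁ s) (hF₂ : C1On F₂ s) : C1On (fun x => F₁ x + F₂ x) s where
  differentiableAt x hx := (hF₁.differentiableAt x hx).add (hF₂.differentiableAt x hx)
  continuousOn_fderiv := (hF₁.continuousOn_fderiv.add hF₂.continuousOn_fderiv).congr fun x hx =>
    fderiv_fun_add (hF₁.differentiableAt x hx) (hF₂.differentiableAt x hx)

theorem sub (hF₁ : C1On F₁ s) (hF₂ : C1On F₂ s) : C1On (fun x => F₁ x - F₂ x) s where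
  differentiableAt x hx := (hF₁.differentiableAt x hx).sub (hF₂.differentiableAt x hx)
  continuousOn_fderiv := (hF₁.continuousOn_fderiv.sub hF₂.continuousOn_fderiv).congr fun x hx =>
    fderiv_fun_sub (hF₁.differentiableAt x hx) (hF₂.differentiableAt x hx)

theorem smul (hu : C1On u s) (hF : C1On F s) : C1On (fun x => u x • F x) s where
  differentiableAt x hx := (hu.differentiableAt x hx).smul (hF.differentiableAt x hx)
  continuousOn_fderiv := by
    have hcont : ContinuousOn (fun x => u x • fderiv ℝ F x + (fderiv ℝ u x).smulRight (F x)) s :=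
      (hu.continuousOn.smul hF.continuousOn_fderiv).add
        (((ContinuousLinearMap.smulRightL ℝ E G).continuous.comp_continuousOn
          hu.continuousOn_fderiv).clm_apply hF.continuousOn)
    exact hcont.congr fun x hx =>
      fderiv_fun_smul (hu.differentiableAt x hx) (hF.differentiableAt x hx)

end C1On

end C1On

section Gradient

variable {E : Type*} [NormedAddCommGroup E] [InnerProductSpace ℝ E] [CompleteSpace E]
  {u : E → ℝ} {s : Set E} {x : E}

theorem C1On.continuousOn_gradient (hu : C1On u s) : ContinuousOn (∇ u) s :=
  (LinearIsometryEquiv.continuous _).comp_continuousOn hu.continuousOn_fderiv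

theorem gradient_eq_zero_of_isLocalExtr (hu : IsLocalExtr u x) : ∇ u x = 0 := by
  rw [gradient, hu.fderiv_eq_zero, map_zero]

theorem contDiff_one_gradient (hu : ContDiff ℝ 2 u) : ContDiff ℝ 1 (∇ u) :=
  (InnerProductSpace.toDual ℝ E).symm.contDiff.comp (hu.fderiv_right le_rfl)

end Gradient

section Divergence

variable {E : Type*} [NormedAddCommGroup E] [InnerProductSpace ℝ E] {F F₁ F₂ : E → E}
  {u : E → ℝ} {s : Set E} {x : E}

/-- The divergence of a vector field, as the trace of its derivative. The Laplacian of `u` is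
written `divergence (∇ u)`. -/
noncomputable def divergence (F : E → E) (x : E) : ℝ :=
  LinearMap.trace ℝ E (fderiv ℝ F x)

theorem divergence_eq_sum_inner {ι : Type*} [Fintype ι] (b : OrthonormalBasis ι ℝ E)
    (F : E → E) (x : E) : divergence F x = ∑ i, ⟪b i, fderiv ℝ F x (b i)⟫ :=
  LinearMap.trace_eq_sum_inner _ b

theorem divergence_add (hF₁ : DifferentiableAt ℝ F₁ x) (hF₂ : DifferentiableAt ℝ F₂ x) :
    divergence (fun y => F₁ y + F₂ y) x = divergence F₁ x + divergence F₂ x := by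
  rw [divergence, fderiv_fun_add hF₁ hF₂, ContinuousLinearMap.toLinearMap_add, map_add]
  rfl

theorem divergence_sub (hF₁ : DifferentiableAt ℝ F₁ x) (hF₂ : DifferentiableAt ℝ F₂ x) :
    divergence (fun y => F₁ y - F₂ y) x = divergence F₁ x - divergence F₂ x := by
  rw [divergence, fderiv_fun_sub hF₁ hF₂, ContinuousLinearMap.toLinearMap_sub, map_sub]
  rfl

variable [FiniteDimensional ℝ E]

theorem divergence_smul (hu : DifferentiableAt ℝ u x) (hF : DifferentiableAt ℝ F x) :
    divergence (fun y => u y • F y) x = u x * divergence F x + ⟪∇ u x, F x⟫ := by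
  rw [divergence, fderiv_fun_smul hu hF, inner_gradient_left, divergence,
    ContinuousLinearMap.toLinearMap_add, map_add, ContinuousLinearMap.toLinearMap_smul, map_smul,
    smul_eq_mul]
  congr 1
  exact LinearMap.trace_smulRight (fderiv ℝ u x : E →ₗ[ℝ] ℝ) (F x)

theorem C1On.continuousOn_divergence (hF : C1On F s) : ContinuousOn (divergence F) s := by
  have hsum : divergence F =
      fun x => ∑ i, ⟪stdOrthonormalBasis ℝ E i, fderiv ℝ F x (stdOrthonormalBasis ℝ E i)⟫ :=
    funext (divergence_eq_sum_inner _ F)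
  rw [hsum]
  have hcont := hF.continuousOn_fderiv
  fun_prop

variable [MeasurableSpace E] [BorelSpace E]

theorem integrable_of_continuousOn_of_eq_zero {K : Set E} (hK : IsCompact K)
    {f : E → ℝ} (hf : ContinuousOn f K) (h0 : ∀ x ∉ K, f x = 0) : Integrable f :=
  (integrableOn_iff_integrable_of_support_subset fun _ hx => by_contra fun hxK => hx (h0 _ hxK)).1
    (hf.integrableOn_compact hK)

theorem integral_mul_divergence_eq_neg_integral_inner {ρ : E → ℝ} (hρ : ContDiff ℝ 1 ρ)
    (hρc : HasCompactSupport ρ) (hF : C1On F (tsupport ρ)) :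
    ∫ x, ρ x * divergence F x = -∫ x, ⟪∇ ρ x, F x⟫ := by
  set b := stdOrthonormalBasis ℝ E
  have hFc := hF.continuousOn
  have hF' := hF.continuousOn_fderiv
  have hρ' : Continuous (fderiv ℝ ρ) := hρ.continuous_fderiv one_ne_zero
  have hρ0 : ∀ x ∉ tsupport ρ, ρ x = 0 := fun x hx => image_eq_zero_of_notMem_tsupport hx
  have hρ'0 : ∀ x ∉ tsupport ρ, fderiv ℝ ρ x = 0 := fun x hx => by
    by_contra hne
    exact hx (support_fderiv_subset ℝ (Function.mem_support.2 hne))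
  have hint : ∀ i, Integrable fun x => ρ x * ⟪b i, fderiv ℝ F x (b i)⟫ := fun i =>
    integrable_of_continuousOn_of_eq_zero hρc (hρ.continuous.continuousOn.mul (by fun_prop))
      fun x hx => by rw [hρ0 x hx, zero_mul]
  have hint' : ∀ i, Integrable fun x => fderiv ℝ ρ x (b i) * ⟪b i, F x⟫ := fun i =>
    integrable_of_continuousOn_of_eq_zero hρc
      ((hρ'.clm_apply continuous_const).continuousOn.mul (by fun_prop))
      fun x hx => by rw [hρ'0 x hx, zero_apply, zero_mul]
  have hcomponent : ∀ i, ∫ x, ρ x * ⟪b i, fderiv ℝ F x (b i)⟫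
      = -∫ x, fderiv ℝ ρ x (b i) * ⟪b i, F x⟫ := fun i => by
    refine integral_bilinear_hasLineDerivAt_right_eq_neg_left_of_integrable (v := b i)
      (B := ContinuousLinearMap.mul ℝ ℝ) (hint' i) (hint i) ?_ ?_ ?_
    · exact integrable_of_continuousOn_of_eq_zero hρc
        (hρ.continuous.continuousOn.mul (continuousOn_const.inner hFc))
        fun x hx => by simp only [hρ0 x hx, map_zero, zero_apply]
    · exact fun x _ => (hρ.differentiable one_ne_zero x).hasFDerivAt.hasLineDerivAt _
    · intro x hx
      simpa using ((hasFDerivAt_const (b i) x).inner ℝ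
        (hF.differentiableAt x hx).hasFDerivAt).hasLineDerivAt (b i)
  calc ∫ x, ρ x * divergence F x
      = ∫ x, ∑ i, ρ x * ⟪b i, fderiv ℝ F x (b i)⟫ := by
        simp_rw [divergence_eq_sum_inner b, Finset.mul_sum]
    _ = -∫ x, ∑ i, fderiv ℝ ρ x (b i) * ⟪b i, F x⟫ := by
        rw [integral_finsetSum _ fun i _ => hint i, integral_finsetSum _ fun i _ => hint' i,
          ← Finset.sum_neg_distrib]
        exact Finset.sum_congr rfl fun i _ => hcomponent i
    _ = -∫ x, ⟪∇ ρ x, F x⟫ := by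
        simp_rw [← inner_gradient_left, b.sum_inner_mul_inner]

end Divergence

section BoundaryCutoff

variable {E : Type*} {Ω : Set E} {η : E → ℝ} {ε : ℝ} {x : E}

/-- A cutoff equal to `1` on `Ω ∩ {2ε ≤ η}` and supported in `closure Ω ∩ {ε ≤ η}`. The indicator
is needed because nothing is known about `η` outside `closure Ω`. -/
noncomputable def boundaryCutoff (Ω : Set E) (η : E → ℝ) (ε : ℝ) : E → ℝ :=
  Ω.indicator fun x => smoothTransition (η x / ε - 1)

theorem boundaryCutoff_nonneg : 0 ≤ boundaryCutoff Ω η ε x :=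
  indicator_nonneg (fun _ _ => smoothTransition.nonneg _) x

theorem boundaryCutoff_le_one : boundaryCutoff Ω η ε x ≤ 1 :=
  indicator_le' (fun _ _ => smoothTransition.le_one _) (fun _ _ => zero_le_one) x

theorem boundaryCutoff_eq_one (hε : 0 < ε) (hx : x ∈ Ω) (hηx : 2 * ε ≤ η x) :
    boundaryCutoff Ω η ε x = 1 := by
  rw [boundaryCutoff, indicator_of_mem hx]
  refine smoothTransition.one_of_one_le ?_
  linarith [(le_div_iff₀ hε).2 hηx]

theorem boundaryCutoff_eq_zero [TopologicalSpace E] (hε : 0 < ε)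
    (hx : x ∉ closure Ω ∩ {y | ε ≤ η y}) : boundaryCutoff Ω η ε x = 0 := by
  refine indicator_apply_eq_zero.2 fun hxΩ => smoothTransition.zero_of_nonpos ?_
  have hηx : η x < ε := not_le.1 fun hle => hx ⟨subset_closure hxΩ, hle⟩
  rw [sub_nonpos, div_le_one hε]
  exact hηx.le

end BoundaryCutoff

section DefiningFunction

variable {E : Type*} [NormedAddCommGroup E] [InnerProductSpace ℝ E] [FiniteDimensional ℝ E]
  {Ω : Set E} {η : E → ℝ} {ε : ℝ} {x : E}

/-- `η` describes the bounded open set `Ω` from inside: it is of class `C²`, positive on `Ω`, and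
vanishes on `∂Ω` with nonzero gradient, so that `∇ η` is an inner normal field along `∂Ω`. -/
structure IsDefiningFunction (η : E → ℝ) (Ω : Set E) : Prop where
  isOpen : IsOpen Ω
  isBounded : Bornology.IsBounded Ω
  contDiff : ContDiff ℝ 2 η
  pos : ∀ x ∈ Ω, 0 < η x
  eq_zero : ∀ x ∈ frontier Ω, η x = 0
  gradient_ne_zero : ∀ x ∈ frontier Ω, ∇ η x ≠ 0

namespace IsDefiningFunction

theorem continuous (hη : IsDefiningFunction η Ω) : Continuous η := hη.contDiff.continuous

theorem contDiff_gradient (hη : IsDefiningFunction η Ω) : ContDiff ℝ 1 (∇ η) :=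
  contDiff_one_gradient hη.contDiff

theorem mem_frontier_of_notMem (hη : IsDefiningFunction η Ω) (hx : x ∈ closure Ω) (hxΩ : x ∉ Ω) :
    x ∈ frontier Ω :=
  ⟨hx, by rwa [hη.isOpen.interior_eq]⟩

theorem mem_of_pos (hη : IsDefiningFunction η Ω) (hx : x ∈ closure Ω) (hpos : 0 < η x) : x ∈ Ω :=
  by_contra fun hxΩ => hpos.ne' (hη.eq_zero x (hη.mem_frontier_of_notMem hx hxΩ))

theorem isCompact_superlevel (hη : IsDefiningFunction η Ω) :
    IsCompact (closure Ω ∩ {x | ε ≤ η x}) :=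
  hη.isBounded.isCompact_closure.inter_right (isClosed_le continuous_const hη.continuous)

theorem superlevel_subset (hη : IsDefiningFunction η Ω) (hε : 0 < ε) :
    closure Ω ∩ {x | ε ≤ η x} ⊆ Ω :=
  fun _ hx => hη.mem_of_pos hx.1 (hε.trans_le hx.2)

theorem tsupport_boundaryCutoff_subset (hη : IsDefiningFunction η Ω) (hε : 0 < ε) :
    tsupport (boundaryCutoff Ω η ε) ⊆ closure Ω ∩ {x | ε ≤ η x} :=
  closure_minimal (fun _ hx => by_contra fun hxK => hx (boundaryCutoff_eq_zero hε hxK))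
    hη.isCompact_superlevel.isClosed

theorem contDiff_boundaryCutoff (hη : IsDefiningFunction η Ω) (hε : 0 < ε) :
    ContDiff ℝ 2 (boundaryCutoff Ω η ε) := by
  refine contDiff_iff_contDiffAt.2 fun x => ?_
  by_cases hx : x ∈ Ω
  · have hsmooth : ContDiff ℝ 2 fun y => smoothTransition (η y / ε - 1) :=
      smoothTransition.contDiff.comp ((hη.contDiff.div_const ε).sub contDiff_const)
    refine hsmooth.contDiffAt.congr_of_eventuallyEq ?_
    filter_upwards [hη.isOpen.mem_nhds hx] with y hy
    exact indicator_of_mem hy _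
  · have hxK : x ∉ closure Ω ∩ {y | ε ≤ η y} := fun hxK => hx (hη.superlevel_subset hε hxK)
    refine (contDiffAt_const (c := (0 : ℝ))).congr_of_eventuallyEq ?_
    filter_upwards [hη.isCompact_superlevel.isClosed.isOpen_compl.mem_nhds hxK] with y hy
    exact boundaryCutoff_eq_zero hε hy

theorem gradient_boundaryCutoff_of_mem (hη : IsDefiningFunction η Ω) (hx : x ∈ Ω) :
    ∇ (boundaryCutoff Ω η ε) x = (deriv smoothTransition (η x / ε - 1) / ε) • ∇ η x := by
  have hloc : boundaryCutoff Ω η ε =ᶠ[𝓝 x] fun y => smoothTransition (η y / ε - 1) := by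
    filter_upwards [hη.isOpen.mem_nhds hx] with y hy
    exact indicator_of_mem hy _
  have hS : HasDerivAt smoothTransition (deriv smoothTransition (η x / ε - 1)) (η x / ε - 1) :=
    (smoothTransition.contDiff (n := 1).differentiable one_ne_zero _).hasDerivAt
  have hscaled : HasFDerivAt (fun y => η y / ε - 1) (ε⁻¹ • fderiv ℝ η x) x := by
    simp only [div_eq_inv_mul]
    exact ((hη.contDiff.differentiable two_ne_zero x).hasFDerivAt.const_mul ε⁻¹).sub_const 1
  have hcomp := (hS.comp_hasFDerivAt x hscaled).fderiv
  rw [Function.comp_def, smul_smul, ← div_eq_mul_inv] at hcomp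
  rw [hloc.gradient_eq, gradient, hcomp, map_smulₛₗ]
  rfl

theorem inner_gradient_boundaryCutoff_nonneg (hη : IsDefiningFunction η Ω) (hε : 0 < ε) {v : E}
    (hv : x ∈ Ω → η x < 2 * ε → 0 ≤ ⟪v, ∇ η x⟫) : 0 ≤ ⟪∇ (boundaryCutoff Ω η ε) x, v⟫ := by
  by_cases hx : x ∈ Ω
  · rcases lt_or_ge (η x) (2 * ε) with hlt | hge
    · rw [hη.gradient_boundaryCutoff_of_mem hx, real_inner_smul_left, real_inner_comm]
      exact mul_nonneg (div_nonneg smoothTransition.monotone.deriv_nonneg hε.le) (hv hx hlt)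
    · have hmax : IsLocalMax (boundaryCutoff Ω η ε) x := Eventually.of_forall fun y => by
        rw [boundaryCutoff_eq_one hε hx hge]
        exact boundaryCutoff_le_one
      rw [gradient_eq_zero_of_isLocalExtr hmax.isExtr, inner_zero_left]
  · have hmin : IsLocalMin (boundaryCutoff Ω η ε) x := Eventually.of_forall fun y => by
      rw [boundaryCutoff, indicator_of_notMem hx]
      exact boundaryCutoff_nonneg
    rw [gradient_eq_zero_of_isLocalExtr hmin.isExtr, inner_zero_left]

theorem exists_forall_lt_imp_pos (hη : IsDefiningFunction η Ω) {f : E → ℝ}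
    (hf : ContinuousOn f (closure Ω)) (hpos : ∀ x ∈ frontier Ω, 0 < f x) :
    ∃ κ > 0, ∀ x ∈ closure Ω, η x < κ → 0 < f x := by
  set B := closure Ω ∩ f ⁻¹' Iic 0
  have hB : IsCompact B := hη.isBounded.isCompact_closure.of_isClosed_subset
    (hf.preimage_isClosed_of_isClosed isClosed_closure isClosed_Iic) inter_subset_left
  have hBpos : ∀ x ∈ B, 0 < η x := fun x hx => hη.pos x <| by_contra fun hxΩ =>
    (hpos x (hη.mem_frontier_of_notMem hx.1 hxΩ)).not_ge hx.2
  obtain ⟨κ, hκ, hκB⟩ := hB.exists_forall_le' hη.continuous.continuousOn hBpos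
  exact ⟨κ, hκ, fun x hx hlt => not_le.1 fun hle => hlt.not_ge (hκB x ⟨hx, hle⟩)⟩

variable [MeasurableSpace E] [BorelSpace E]

theorem integrableOn (hη : IsDefiningFunction η Ω) {f : E → ℝ}
    (hf : ContinuousOn f (closure Ω)) : IntegrableOn f Ω :=
  (hf.integrableOn_compact hη.isBounded.isCompact_closure).mono_set subset_closure

theorem tendsto_integral_boundaryCutoff_mul (hη : IsDefiningFunction η Ω) {f : E → ℝ}
    (hf : ContinuousOn f (closure Ω)) :
    Tendsto (fun ε => ∫ x in Ω, boundaryCutoff Ω η ε x * f x) (𝓝[>] 0) (𝓝 (∫ x in Ω, f x)) := by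
  refine tendsto_integral_filter_of_dominated_convergence (fun x => ‖f x‖) ?_ ?_
    (hη.integrableOn hf).norm ?_
  · filter_upwards [self_mem_nhdsWithin] with ε hε
    exact (hη.contDiff_boundaryCutoff hε).continuous.aestronglyMeasurable.mul
      (hη.integrableOn hf).aestronglyMeasurable
  · refine Eventually.of_forall fun ε => Eventually.of_forall fun x => ?_
    rw [norm_mul, norm_of_nonneg boundaryCutoff_nonneg]
    exact mul_le_of_le_one_left (norm_nonneg _) boundaryCutoff_le_one
  · filter_upwards [ae_restrict_mem hη.isOpen.measurableSet] with x hx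
    refine tendsto_const_nhds.congr' ?_
    filter_upwards [Ioo_mem_nhdsGT (half_pos (hη.pos x hx))] with ε hε
    rw [boundaryCutoff_eq_one hε.1 hx (by linarith [hε.2]), one_mul]

theorem integral_divergence_nonpos_of_pos (hη : IsDefiningFunction η Ω) {F : E → E}
    (hF : C1On F (closure Ω)) (hpos : ∀ x ∈ frontier Ω, 0 < ⟪F x, ∇ η x⟫) :
    ∫ x in Ω, divergence F x ≤ 0 := by
  obtain ⟨κ, hκ, hκpos⟩ := hη.exists_forall_lt_imp_pos
    (hF.continuousOn.inner hη.contDiff_gradient.continuous.continuousOn) hpos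
  refine le_of_tendsto (hη.tendsto_integral_boundaryCutoff_mul hF.continuousOn_divergence) ?_
  filter_upwards [Ioo_mem_nhdsGT (half_pos hκ)] with ε ⟨hε, hεκ⟩
  have hsupp := hη.tsupport_boundaryCutoff_subset hε
  have hcompact : HasCompactSupport (boundaryCutoff Ω η ε) :=
    hη.isCompact_superlevel.of_isClosed_subset (isClosed_tsupport _) hsupp
  have hoff : ∀ x ∉ Ω, boundaryCutoff Ω η ε x * divergence F x = 0 := fun x hx => by
    rw [boundaryCutoff, indicator_of_notMem hx, zero_mul]
  rw [setIntegral_eq_integral_of_forall_compl_eq_zero hoff,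
    integral_mul_divergence_eq_neg_integral_inner
      ((hη.contDiff_boundaryCutoff hε).of_le one_le_two) hcompact
      (hF.mono (hsupp.trans inter_subset_left)), neg_nonpos]
  exact integral_nonneg fun x => hη.inner_gradient_boundaryCutoff_nonneg hε fun hx hlt =>
    (hκpos x (subset_closure hx) (by linarith)).le

/-- No surface measure on `∂Ω` is involved: adding `δ ∇ η` makes the inward flux strictly positive,
and then the gradient of a cutoff near `∂Ω` has a nonnegative inner product with the field. -/
theorem integral_divergence_nonpos (hη : IsDefiningFunction η Ω) {F : E → E}
    (hF : C1On F (closure Ω)) (hnonneg : ∀ x ∈ frontier Ω, 0 ≤ ⟪F x, ∇ η x⟫) :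
    ∫ x in Ω, divergence F x ≤ 0 := by
  have hgrad : C1On (∇ η) (closure Ω) := .of_contDiff hη.contDiff_gradient _
  set I := ∫ x in Ω, divergence F x
  set J := ∫ x in Ω, divergence (∇ η) x
  have hperturbed : ∀ δ > 0, I + δ * J ≤ 0 := fun δ hδ => by
    have hδgrad : C1On (fun x => δ • ∇ η x) (closure Ω) :=
      .of_contDiff (hη.contDiff_gradient.const_smul δ) _
    have hdiv : ∀ x ∈ Ω, divergence (fun y => F y + δ • ∇ η y) x
        = divergence F x + δ * divergence (∇ η) x := fun x hx => by
      have hx' := subset_closure hx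
      rw [divergence_add (hF.differentiableAt x hx') (hδgrad.differentiableAt x hx'),
        divergence_smul (differentiableAt_const δ) (hgrad.differentiableAt x hx'),
        gradient_fun_const, inner_zero_left, add_zero]
    have hle := hη.integral_divergence_nonpos_of_pos (hF.add hδgrad) fun x hx => by
      rw [inner_add_left, real_inner_smul_left, real_inner_self_eq_norm_sq]
      have hnorm : 0 < ‖∇ η x‖ := norm_pos_iff.2 (hη.gradient_ne_zero x hx)
      linarith [hnonneg x hx, mul_pos hδ (pow_pos hnorm 2)]
    rwa [setIntegral_congr_fun hη.isOpen.measurableSet hdiv,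
      integral_add (hη.integrableOn hF.continuousOn_divergence)
        ((hη.integrableOn hgrad.continuousOn_divergence).const_mul δ), integral_const_mul] at hle
  have hlim : Tendsto (fun δ : ℝ => I + δ * J) (𝓝[>] 0) (𝓝 (I + 0 * J)) :=
    tendsto_nhdsWithin_of_tendsto_nhds (Continuous.tendsto (by fun_prop) 0)
  simpa using le_of_tendsto hlim (eventually_nhdsWithin_of_forall hperturbed)

end IsDefiningFunction

end DefiningFunction

section Cone

variable {E : Type*} [NormedAddCommGroup E] [NormedSpace ℝ E]

/-- Near `x₀`, all points of `Ω` are vertices of truncated cones contained in `Ω`, with common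
directions `ball v δ` and common height parameter `δ`. -/
def UniformConeAt (Ω : Set E) (x₀ : E) : Prop :=
  ∃ v, ∃ δ > 0, ∀ x ∈ Ω ∩ ball x₀ δ, ∀ w ∈ ball v δ, ∀ t ∈ Icc 0 δ, x + t • w ∈ Ω

theorem exists_forall_add_smul_mem {U : Set E} {x₀ : E} (hU : U ∈ 𝓝 x₀) (v : E) :
    ∃ δ > 0, ∀ x ∈ ball x₀ δ, ∀ w ∈ ball v δ, ∀ t ∈ Icc 0 δ, x + t • w ∈ U := by
  have hcont : Continuous fun p : E × E × ℝ => p.1 + p.2.2 • p.2.1 := by fun_prop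
  have hnhds : (fun p : E × E × ℝ => p.1 + p.2.2 • p.2.1) ⁻¹' U ∈ 𝓝 (x₀, v, 0) :=
    hcont.continuousAt.preimage_mem_nhds (by simpa using hU)
  obtain ⟨ε, hε, hball⟩ := Metric.mem_nhds_iff.1 hnhds
  refine ⟨ε / 2, half_pos hε, fun x hx w hw t ht => hball (a := (x, w, t)) ?_⟩
  rw [← ball_prod_same, ← ball_prod_same]
  refine ⟨ball_subset_ball (by linarith) hx, ball_subset_ball (by linarith) hw, ?_⟩
  rw [Metric.mem_ball, Real.dist_eq, sub_zero, abs_of_nonneg ht.1]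
  linarith [ht.2]

theorem uniformConeAt_of_isOpen {Ω : Set E} {x₀ : E} (hΩ : IsOpen Ω) (hx₀ : x₀ ∈ Ω) :
    UniformConeAt Ω x₀ := by
  obtain ⟨δ, hδ, hmem⟩ := exists_forall_add_smul_mem (hΩ.mem_nhds hx₀) 0
  exact ⟨0, δ, hδ, fun x hx => hmem x hx.2⟩

theorem hasDerivAt_comp_add_smul {G : Type*} [NormedAddCommGroup G] [NormedSpace ℝ G] {u : E → G}
    {x w : E} {s : ℝ} (hu : DifferentiableAt ℝ u (x + s • w)) :
    HasDerivAt (fun s : ℝ => u (x + s • w)) (fderiv ℝ u (x + s • w) w) s := by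
  have hline : HasDerivAt (fun s : ℝ => x + s • w) w s := by
    simpa using ((hasDerivAt_id s).smul_const w).const_add x
  exact hu.hasFDerivAt.comp_hasDerivAt s hline

end Cone

namespace IsDefiningFunction

variable {E : Type*} [NormedAddCommGroup E] [InnerProductSpace ℝ E] [FiniteDimensional ℝ E]
  {Ω : Set E} {η : E → ℝ} {x w x₀ : E} {t : ℝ}

theorem add_smul_mem (hη : IsDefiningFunction η Ω) (hx : x ∈ Ω) (ht : 0 ≤ t)
    (hderiv : ∀ s ∈ Icc 0 t, 0 ≤ fderiv ℝ η (x + s • w) w) : x + t • w ∈ Ω := by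
  have hηderiv : ∀ s : ℝ, HasDerivAt (fun s : ℝ => η (x + s • w)) (fderiv ℝ η (x + s • w) w) s :=
    fun s => hasDerivAt_comp_add_smul (hη.contDiff.differentiable two_ne_zero _)
  have hmono : MonotoneOn (fun s : ℝ => η (x + s • w)) (Icc 0 t) :=
    monotoneOn_of_hasDerivWithinAt_nonneg (convex_Icc 0 t)
      (fun s _ => (hηderiv s).continuousAt.continuousWithinAt)
      (fun s _ => (hηderiv s).hasDerivWithinAt) fun s hs => hderiv s (interior_subset hs)
  have hpos : ∀ s ∈ Icc 0 t, 0 < η (x + s • w) := fun s hs => by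
    have hle := hmono (left_mem_Icc.2 ht) hs hs.1
    simp only [zero_smul, add_zero] at hle
    exact (hη.pos x hx).trans_le hle
  have hpre : IsPreconnected ((fun s : ℝ => x + s • w) '' Icc 0 t) :=
    isPreconnected_Icc.image _ (by fun_prop)
  have hsub : (fun s : ℝ => x + s • w) '' Icc 0 t ⊆ Ω := by
    refine hpre.subset_of_closure_inter_subset hη.isOpen
      ⟨x, ⟨0, left_mem_Icc.2 ht, by simp⟩, hx⟩ ?_
    rintro _ ⟨hcl, s, hs, rfl⟩
    exact hη.mem_of_pos hcl (hpos s hs)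
  exact hsub ⟨t, right_mem_Icc.2 ht, rfl⟩

/-- At a boundary point the cone opens in the direction of `∇ η`, along which `η` increases, so
that segments starting in `Ω` cannot leave it. -/
theorem uniformConeAt (hη : IsDefiningFunction η Ω) (hx₀ : x₀ ∈ closure Ω) :
    UniformConeAt Ω x₀ := by
  by_cases hx₀Ω : x₀ ∈ Ω
  · exact uniformConeAt_of_isOpen hη.isOpen hx₀Ω
  set v := ∇ η x₀
  have hv : 0 < fderiv ℝ η x₀ v := by
    rw [← inner_gradient_left]
    exact real_inner_self_pos.2
      (hη.gradient_ne_zero x₀ (hη.mem_frontier_of_notMem hx₀ hx₀Ω))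
  have hcont : Continuous fun p : E × E => fderiv ℝ η p.1 p.2 := by
    have := hη.contDiff.continuous_fderiv two_ne_zero
    fun_prop
  have hnhds : ∀ᶠ p : E × E in 𝓝 x₀ ×ˢ 𝓝 v, 0 < fderiv ℝ η p.1 p.2 := by
    rw [← nhds_prod_eq]
    exact hcont.continuousAt.eventually (lt_mem_nhds (b := fderiv ℝ η (x₀, v).1 (x₀, v).2) hv)
  obtain ⟨U, hU, W, hW, hUW⟩ := eventually_prod_iff.1 hnhds
  obtain ⟨ε, hε, hball⟩ := Metric.eventually_nhds_iff_ball.1 hW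
  obtain ⟨δ, hδ, hseg⟩ := exists_forall_add_smul_mem hU v
  refine ⟨v, min δ ε, lt_min hδ hε, fun x hx w hw t ht => hη.add_smul_mem hx.1 ht.1 fun s hs => ?_⟩
  have hxδ := ball_subset_ball (min_le_left δ ε) hx.2
  have hwδ := ball_subset_ball (min_le_left δ ε) hw
  have hsδ : s ≤ δ := (hs.2.trans ht.2).trans (min_le_left δ ε)
  exact (hUW (hseg x hxδ w hwδ s ⟨hs.1, hsδ⟩)
    (hball w (ball_subset_ball (min_le_right δ ε) hw))).le

end IsDefiningFunction

section Nash

theorem sq_sub_le_mul_integral_deriv_sq {f f' : ℝ → ℝ} {a b : ℝ} (hab : a < b)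
    (hf : ∀ s ∈ Icc a b, HasDerivAt f (f' s) s) (hf' : ContinuousOn f' (Icc a b)) :
    (f b - f a) ^ 2 ≤ (b - a) * ∫ s in a..b, f' s ^ 2 := by
  rw [← uIcc_of_le hab.le] at hf hf'
  set m := (f b - f a) / (b - a)
  have hm : m * (b - a) = f b - f a := div_mul_cancel₀ _ (sub_pos.2 hab).ne'
  have hftc : ∫ s in a..b, f' s = f b - f a :=
    intervalIntegral.integral_eq_sub_of_hasDerivAt hf hf'.intervalIntegrable
  have hsq : IntervalIntegrable (fun s => f' s ^ 2) volume a b := (hf'.pow 2).intervalIntegrable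
  have hlin : IntervalIntegrable (fun s => 2 * m * f' s) volume a b :=
    (continuousOn_const.mul hf').intervalIntegrable
  have hvariance : 0 ≤ ∫ s in a..b, (f' s - m) ^ 2 :=
    intervalIntegral.integral_nonneg hab.le fun s _ => sq_nonneg _
  have hexpand : ∫ s in a..b, (f' s - m) ^ 2
      = (∫ s in a..b, f' s ^ 2) - 2 * m * (f b - f a) + m ^ 2 * (b - a) := by
    have hpointwise : ∀ s, (f' s - m) ^ 2 = f' s ^ 2 - 2 * m * f' s + m ^ 2 := fun s => by ring
    simp_rw [hpointwise]
    rw [intervalIntegral.integral_add (hsq.sub hlin) intervalIntegrable_const,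
      intervalIntegral.integral_sub hsq hlin, intervalIntegral.integral_const_mul, hftc,
      intervalIntegral.integral_const, smul_eq_mul, mul_comm (b - a)]
  have hscaled := mul_nonneg (sub_pos.2 hab).le (hexpand ▸ hvariance)
  rw [← hm] at hscaled ⊢
  linarith

theorem sq_le_of_segment {E : Type*} [NormedAddCommGroup E] [InnerProductSpace ℝ E]
    [CompleteSpace E] {Ω : Set E} {u : E → ℝ} (hu : C1On u Ω) {x w : E} {h : ℝ} (hh : 0 < h)
    (hseg : ∀ t ∈ Icc 0 h, x + t • w ∈ Ω) :
    u x ^ 2 ≤ 2 * (u x * u (x + h • w))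
      + h * ‖w‖ ^ 2 * ∫ t in (0 : ℝ)..h, ‖∇ u (x + t • w)‖ ^ 2 := by
  have hline : ContinuousOn (fun s : ℝ => x + s • w) (Icc 0 h) :=
    Continuous.continuousOn (by fun_prop)
  have hfderiv := hu.continuousOn_fderiv.comp hline hseg
  have hgrad := hu.continuousOn_gradient.comp hline hseg
  have hderivSq : ContinuousOn (fun s : ℝ => fderiv ℝ u (x + s • w) w ^ 2) (uIcc 0 h) := by
    rw [uIcc_of_le hh.le]
    exact (hfderiv.clm_apply continuousOn_const).pow 2
  have hnormSq : ContinuousOn (fun s : ℝ => ‖w‖ ^ 2 * ‖∇ u (x + s • w)‖ ^ 2) (uIcc 0 h) := by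
    rw [uIcc_of_le hh.le]
    exact continuousOn_const.mul (hgrad.norm.pow 2)
  have hincrement := sq_sub_le_mul_integral_deriv_sq hh
    (fun s hs => hasDerivAt_comp_add_smul (hu.differentiableAt _ (hseg s hs)))
    (hfderiv.clm_apply continuousOn_const)
  have hdirectional : ∫ s in (0 : ℝ)..h, fderiv ℝ u (x + s • w) w ^ 2
      ≤ ‖w‖ ^ 2 * ∫ s in (0 : ℝ)..h, ‖∇ u (x + s • w)‖ ^ 2 := by
    rw [← intervalIntegral.integral_const_mul]
    refine intervalIntegral.integral_mono_on hh.le hderivSq.intervalIntegrable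
      hnormSq.intervalIntegrable fun s _ => ?_
    rw [← inner_gradient_left, ← sq_abs, mul_comm, ← mul_pow]
    gcongr
    exact abs_real_inner_le_norm _ _
  rw [zero_smul, add_zero, sub_zero] at hincrement
  have hscaled := mul_le_mul_of_nonneg_left hdirectional hh.le
  linarith [sq_nonneg (u (x + h • w))]

end Nash

section Averaging

variable {E : Type*} [NormedAddCommGroup E] [NormedSpace ℝ E] [FiniteDimensional ℝ E]
  [MeasurableSpace E] [BorelSpace E] (μ : Measure E) [μ.IsAddHaarMeasure]
  {f g : E → ENNReal} {h : ℝ}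

theorem lintegral_comp_add_smul (hf : Measurable f) (x : E) (hh : 0 < h) :
    ∫⁻ w, f (x + h • w) ∂μ = ENNReal.ofReal (h ^ Module.finrank ℝ E)⁻¹ * ∫⁻ w, f w ∂μ := by
  have hmap : ∫⁻ w, f (x + h • w) ∂μ = ∫⁻ y, f (x + y) ∂(μ.map (h • ·)) :=
    (lintegral_map (f := fun y => f (x + y)) (by fun_prop) (by fun_prop)).symm
  rw [hmap, Measure.map_addHaar_smul μ hh.ne', lintegral_smul_measure,
    lintegral_add_left_eq_self, abs_of_pos (by positivity), smul_eq_mul]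

theorem lintegral_segment (hg : Measurable g) (w : E) :
    ∫⁻ x, (∫⁻ t in Icc (0 : ℝ) h, g (x + t • w)) ∂μ = ENNReal.ofReal h * ∫⁻ x, g x ∂μ := by
  rw [lintegral_lintegral_swap (Measurable.aemeasurable (by unfold Function.uncurry; fun_prop))]
  simp_rw [lintegral_add_right_eq_self g]
  rw [setLIntegral_const, Real.volume_Icc, sub_zero, mul_comm]

theorem lintegral_lintegral_mul_comp_add_smul (hf : Measurable f) (hh : 0 < h) :
    ∫⁻ w, ∫⁻ x, f x * f (x + h • w) ∂μ ∂μ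
      = ENNReal.ofReal (h ^ Module.finrank ℝ E)⁻¹ * (∫⁻ x, f x ∂μ) ^ 2 := by
  rw [lintegral_lintegral_swap (Measurable.aemeasurable (by unfold Function.uncurry; fun_prop))]
  calc ∫⁻ x, ∫⁻ w, f x * f (x + h • w) ∂μ ∂μ
      = ∫⁻ x, f x * (ENNReal.ofReal (h ^ Module.finrank ℝ E)⁻¹ * ∫⁻ w, f w ∂μ) ∂μ := by
        refine lintegral_congr fun x => ?_
        rw [lintegral_const_mul _ (by fun_prop), lintegral_comp_add_smul μ hf x hh]
    _ = _ := by rw [lintegral_mul_const _ hf]; ring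

theorem measure_mul_setLIntegral_sq_le_of_segment (hf : Measurable f) (hg : Measurable g)
    {U B : Set E} (hB : MeasurableSet B) (hU : MeasurableSet U) (hh : 0 < h) {k : ENNReal}
    (hsegment : ∀ x ∈ U, ∀ w ∈ B,
      f x ^ 2 ≤ 2 * (f x * f (x + h • w)) + k * ∫⁻ t in Icc 0 h, g (x + t • w)) :
    μ B * ∫⁻ x in U, f x ^ 2 ∂μ
      ≤ 2 * (ENNReal.ofReal (h ^ Module.finrank ℝ E)⁻¹ * (∫⁻ x, f x ∂μ) ^ 2)
        + μ B * (k * (ENNReal.ofReal h * ∫⁻ x, g x ∂μ)) := by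
  have hdirection : ∀ w ∈ B, ∫⁻ x in U, f x ^ 2 ∂μ
      ≤ 2 * (∫⁻ x, f x * f (x + h • w) ∂μ) + k * (ENNReal.ofReal h * ∫⁻ x, g x ∂μ) := fun w hw =>
    calc ∫⁻ x in U, f x ^ 2 ∂μ
        ≤ ∫⁻ x in U, (2 * (f x * f (x + h • w)) + k * ∫⁻ t in Icc 0 h, g (x + t • w)) ∂μ :=
          setLIntegral_mono' hU fun x hx => hsegment x hx w hw
      _ ≤ ∫⁻ x, (2 * (f x * f (x + h • w)) + k * ∫⁻ t in Icc 0 h, g (x + t • w)) ∂μ :=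
          setLIntegral_le_lintegral _ _
      _ = _ := by
          rw [lintegral_add_left (by fun_prop), lintegral_const_mul _ (by fun_prop),
            lintegral_const_mul _ (Measurable.lintegral_prod_right (by fun_prop)),
            lintegral_segment μ hg w]
  calc μ B * ∫⁻ x in U, f x ^ 2 ∂μ
      = ∫⁻ _ in B, ∫⁻ x in U, f x ^ 2 ∂μ ∂μ := by rw [setLIntegral_const, mul_comm]
    _ ≤ ∫⁻ w in B, (2 * (∫⁻ x, f x * f (x + h • w) ∂μ)
          + k * (ENNReal.ofReal h * ∫⁻ x, g x ∂μ)) ∂μ := setLIntegral_mono' hB hdirection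
    _ = 2 * (∫⁻ w in B, ∫⁻ x, f x * f (x + h • w) ∂μ ∂μ)
          + μ B * (k * (ENNReal.ofReal h * ∫⁻ x, g x ∂μ)) := by
        rw [lintegral_add_right _ measurable_const, setLIntegral_const, mul_comm (μ B),
          lintegral_const_mul _ (Measurable.lintegral_prod_right (by fun_prop))]
    _ ≤ _ := by
        gcongr
        exact (setLIntegral_le_lintegral _ _).trans_eq
          (lintegral_lintegral_mul_comp_add_smul μ hf hh)

end Averaging

section NashInequality

variable {E : Type*} [NormedAddCommGroup E] [InnerProductSpace ℝ E] [FiniteDimensional ℝ E]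
  {Ω : Set E}

theorem measurable_indicator_of_continuousOn {X : Type*} [TopologicalSpace X] [MeasurableSpace X]
    [OpensMeasurableSpace X] {s : Set X} (hs : MeasurableSet s) {f : X → ENNReal}
    (hf : ContinuousOn f s) : Measurable (s.indicator f) := by
  classical
  rw [← piecewise_eq_indicator]
  exact hf.measurable_piecewise continuousOn_const hs

theorem enorm_sq_le_of_segment {u : E → ℝ} (hu : C1On u Ω) {x w : E} {h : ℝ} (hh : 0 < h)
    (hseg : ∀ t ∈ Icc 0 h, x + t • w ∈ Ω) :
    ‖u x‖ₑ ^ 2 ≤ 2 * (‖u x‖ₑ * ‖u (x + h • w)‖ₑ)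
      + ENNReal.ofReal h * ‖w‖ₑ ^ 2 * ∫⁻ t in Icc 0 h, ‖∇ u (x + t • w)‖ₑ ^ 2 := by
  have hgrad : ContinuousOn (fun s : ℝ => ‖∇ u (x + s • w)‖ ^ 2) (Icc 0 h) :=
    (hu.continuousOn_gradient.comp (Continuous.continuousOn (by fun_prop)) hseg).norm.pow 2
  have hint : ∫⁻ t in Icc 0 h, ‖∇ u (x + t • w)‖ₑ ^ 2
      = ENNReal.ofReal (∫ t in (0 : ℝ)..h, ‖∇ u (x + t • w)‖ ^ 2) := by
    rw [intervalIntegral.integral_of_le hh.le, ← integral_Icc_eq_integral_Ioc,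
      ofReal_integral_eq_lintegral_ofReal (hgrad.integrableOn_compact isCompact_Icc)
        (Eventually.of_forall fun t => by positivity)]
    simp_rw [ENNReal.ofReal_pow (norm_nonneg _), ofReal_norm]
  have hreal : ‖u x‖ ^ 2 ≤ 2 * (‖u x‖ * ‖u (x + h • w)‖)
      + h * ‖w‖ ^ 2 * ∫ t in (0 : ℝ)..h, ‖∇ u (x + t • w)‖ ^ 2 := by
    rw [← norm_mul, Real.norm_eq_abs (u x), sq_abs]
    linarith [sq_le_of_segment hu hh hseg, le_abs_self (u x * u (x + h • w)),
      Real.norm_eq_abs (u x * u (x + h • w))]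
  have hnonneg : 0 ≤ ∫ t in (0 : ℝ)..h, ‖∇ u (x + t • w)‖ ^ 2 :=
    intervalIntegral.integral_nonneg hh.le fun _ _ => by positivity
  rw [hint]
  simp_rw [← ofReal_norm]
  rw [← ENNReal.ofReal_pow (norm_nonneg _), ← ENNReal.ofReal_pow (norm_nonneg _),
    ← ENNReal.ofReal_mul (norm_nonneg _), ← ENNReal.ofReal_mul hh.le,
    ← ENNReal.ofReal_mul (by positivity), ← ENNReal.ofReal_ofNat 2,
    ← ENNReal.ofReal_mul zero_le_two, ← ENNReal.ofReal_add (by positivity) (by positivity)]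
  exact ENNReal.ofReal_le_ofReal hreal

variable [MeasurableSpace E] [BorelSpace E]

/-- A scale-invariant form of the Nash inequality for functions on `Ω`, localised to the part
`Ω ∩ S` on the left-hand side, and valid at all small scales `h`. Optimising over `h` would give
the usual multiplicative form. -/
def LocalNashInequality (Ω S : Set E) : Prop :=
  ∃ C : ENNReal, C ≠ ⊤ ∧ ∃ h₀ > 0, ∀ h ∈ Ioc 0 h₀, ∀ u : E → ℝ, C1On u Ω →
    ∫⁻ x in Ω ∩ S, ‖u x‖ₑ ^ 2 ≤ C * (ENNReal.ofReal (h ^ Module.finrank ℝ E)⁻¹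
      * (∫⁻ x in Ω, ‖u x‖ₑ) ^ 2 + ENNReal.ofReal (h ^ 2) * ∫⁻ x in Ω, ‖∇ u x‖ₑ ^ 2)

theorem volume_mul_lintegral_sq_le_of_cone (hΩ : IsOpen Ω) {U : Set E} (hU : MeasurableSet U)
    (hUΩ : U ⊆ Ω) {v : E} {δ h : ℝ} (hh : 0 < h)
    (hcone : ∀ x ∈ U, ∀ w ∈ ball v δ, ∀ t ∈ Icc 0 h, x + t • w ∈ Ω) {u : E → ℝ} (hu : C1On u Ω) :
    volume (ball v δ) * ∫⁻ x in U, ‖u x‖ₑ ^ 2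
      ≤ 2 * (ENNReal.ofReal (h ^ Module.finrank ℝ E)⁻¹ * (∫⁻ x in Ω, ‖u x‖ₑ) ^ 2)
        + volume (ball v δ) * (ENNReal.ofReal h * ENNReal.ofReal (‖v‖ + δ) ^ 2
          * (ENNReal.ofReal h * ∫⁻ x in Ω, ‖∇ u x‖ₑ ^ 2)) := by
  have hmeas := hΩ.measurableSet
  set f := Ω.indicator fun x => ‖u x‖ₑ
  set g := Ω.indicator fun x => ‖∇ u x‖ₑ ^ 2
  have hf : Measurable f := measurable_indicator_of_continuousOn hmeas hu.continuousOn.enorm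
  have hg : Measurable g := measurable_indicator_of_continuousOn hmeas
    ((ENNReal.continuous_pow 2).comp_continuousOn hu.continuousOn_gradient.enorm)
  have haverage := measure_mul_setLIntegral_sq_le_of_segment volume hf hg (U := U)
    (B := ball v δ) (k := ENNReal.ofReal h * ENNReal.ofReal (‖v‖ + δ) ^ 2) measurableSet_ball hU hh
    fun x hx w hw => by
      have hseg := hcone x hx w hw
      have hsegint : ∫⁻ t in Icc 0 h, g (x + t • w) = ∫⁻ t in Icc 0 h, ‖∇ u (x + t • w)‖ₑ ^ 2 :=
        setLIntegral_congr_fun measurableSet_Icc fun t ht => indicator_of_mem (hseg t ht) _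
      have hw' : ‖w‖ₑ ≤ ENNReal.ofReal (‖v‖ + δ) := by
        rw [← ofReal_norm]
        refine ENNReal.ofReal_le_ofReal ?_
        linarith [norm_sub_norm_le w v, mem_ball_iff_norm.1 hw]
      rw [hsegint, show f x = ‖u x‖ₑ from indicator_of_mem (hUΩ hx) _,
        show f (x + h • w) = ‖u (x + h • w)‖ₑ from
          indicator_of_mem (hseg h (right_mem_Icc.2 hh.le)) _]
      refine (enorm_sq_le_of_segment hu hh hseg).trans ?_
      gcongr
  have hf_sq : ∫⁻ x in U, f x ^ 2 = ∫⁻ x in U, ‖u x‖ₑ ^ 2 :=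
    setLIntegral_congr_fun hU fun x hx => by simp only [f, indicator_of_mem (hUΩ hx)]
  rwa [lintegral_indicator hmeas, lintegral_indicator hmeas, hf_sq] at haverage

theorem localNashInequality_ball (hΩ : IsOpen Ω) {x₀ v : E} {δ : ℝ} (hδ : 0 < δ)
    (hcone : ∀ x ∈ Ω ∩ ball x₀ δ, ∀ w ∈ ball v δ, ∀ t ∈ Icc 0 δ, x + t • w ∈ Ω) :
    LocalNashInequality Ω (ball x₀ δ) := by
  set β := volume (ball v δ)
  have hβ : β ≠ 0 := (measure_ball_pos volume v hδ).ne'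
  have hβtop : β ≠ ⊤ := measure_ball_lt_top.ne
  refine ⟨2 / β + ENNReal.ofReal (‖v‖ + δ) ^ 2, by finiteness, δ, hδ, fun h hh u hu => ?_⟩
  have hlocal := volume_mul_lintegral_sq_le_of_cone hΩ (hΩ.measurableSet.inter measurableSet_ball)
    inter_subset_left hh.1 (fun x hx w hw t ht => hcone x hx w hw t ⟨ht.1, ht.2.trans hh.2⟩) hu
  set X := ENNReal.ofReal (h ^ Module.finrank ℝ E)⁻¹ * (∫⁻ x in Ω, ‖u x‖ₑ) ^ 2
  set D := ∫⁻ x in Ω, ‖∇ u x‖ₑ ^ 2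
  set R := ENNReal.ofReal (‖v‖ + δ) ^ 2
  set H := ENNReal.ofReal h
  calc ∫⁻ x in Ω ∩ ball x₀ δ, ‖u x‖ₑ ^ 2
      = β⁻¹ * (β * ∫⁻ x in Ω ∩ ball x₀ δ, ‖u x‖ₑ ^ 2) := by
        rw [← mul_assoc, ENNReal.inv_mul_cancel hβ hβtop, one_mul]
    _ ≤ β⁻¹ * (2 * X + β * (H * R * (H * D))) := by gcongr
    _ = 2 / β * X + R * (ENNReal.ofReal (h ^ 2) * D) := by
        rw [mul_add, ← mul_assoc β⁻¹ β, ENNReal.inv_mul_cancel hβ hβtop,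
          ENNReal.ofReal_pow hh.1.le, div_eq_mul_inv]
        ring
    _ ≤ (2 / β + R) * (X + ENNReal.ofReal (h ^ 2) * D) := by
        rw [mul_add]
        gcongr
        · exact le_self_add
        · exact le_add_self

theorem localNashInequality_closure (hΩ : IsOpen Ω) (hΩb : Bornology.IsBounded Ω)
    (hcone : ∀ x ∈ closure Ω, UniformConeAt Ω x) : LocalNashInequality Ω (closure Ω) := by
  refine hΩb.isCompact_closure.induction_on ?_ ?_ ?_ ?_
  · exact ⟨0, ENNReal.zero_ne_top, 1, one_pos, fun h _ u _ => by simp⟩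
  · rintro S T hST ⟨C, hC, h₀, hh₀, hnash⟩
    exact ⟨C, hC, h₀, hh₀, fun h hh u hu =>
      (lintegral_mono_set (inter_subset_inter_right _ hST)).trans (hnash h hh u hu)⟩
  · rintro S T ⟨C, hC, h₀, hh₀, hnash⟩ ⟨C', hC', h₀', hh₀', hnash'⟩
    refine ⟨C + C', ENNReal.add_ne_top.2 ⟨hC, hC'⟩, min h₀ h₀', lt_min hh₀ hh₀',
      fun h hh u hu => ?_⟩
    rw [inter_union_distrib_left, add_mul]
    refine (lintegral_union_le _ _ _).trans (add_le_add ?_ ?_)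
    · exact hnash h ⟨hh.1, hh.2.trans (min_le_left _ _)⟩ u hu
    · exact hnash' h ⟨hh.1, hh.2.trans (min_le_right _ _)⟩ u hu
  · intro x₀ hx₀
    obtain ⟨v, δ, hδ, hmem⟩ := hcone x₀ hx₀
    exact ⟨ball x₀ δ, mem_nhdsWithin_of_mem_nhds (ball_mem_nhds _ hδ),
      localNashInequality_ball hΩ hδ hmem⟩

theorem exists_nash_inequality (hΩ : IsOpen Ω) (hΩb : Bornology.IsBounded Ω)
    (hcone : ∀ x ∈ closure Ω, UniformConeAt Ω x) :
    ∃ C > 0, ∃ δ₀ > 0, ∀ δ ∈ Ioc 0 δ₀, ∀ u : E → ℝ, C1On u (closure Ω) →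
      ∫ x in Ω, u x ^ 2 ≤ C * ((δ ^ Module.finrank ℝ E)⁻¹ * (∫ x in Ω, |u x|) ^ 2
        + δ * ∫ x in Ω, ‖∇ u x‖ ^ 2) := by
  obtain ⟨C, hC, h₀, hh₀, hnash⟩ := localNashInequality_closure hΩ hΩb hcone
  refine ⟨C.toReal + 1, by positivity, min 1 (h₀ ^ 2), by positivity, fun δ hδ u hu => ?_⟩
  have hδ1 : δ ≤ 1 := hδ.2.trans (min_le_left _ _)
  have hsqrt : √δ ∈ Ioc 0 h₀ :=
    ⟨sqrt_pos.2 hδ.1, (sqrt_le_left hh₀.le).2 (hδ.2.trans (min_le_right _ _))⟩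
  have hintegrable : ∀ {f : E → ℝ}, ContinuousOn f (closure Ω) → IntegrableOn f Ω := fun hf =>
    (hf.integrableOn_compact hΩb.isCompact_closure).mono_set subset_closure
  have hsq : ∫⁻ x in Ω, ‖u x‖ₑ ^ 2 = ENNReal.ofReal (∫ x in Ω, u x ^ 2) := by
    rw [ofReal_integral_eq_lintegral_ofReal (f := fun x => u x ^ 2)
      (hintegrable (hu.continuousOn.pow 2))
      (Eventually.of_forall fun x => sq_nonneg _)]
    simp_rw [← ofReal_norm, ← ENNReal.ofReal_pow (norm_nonneg _), Real.norm_eq_abs, sq_abs]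
  have habs : ∫⁻ x in Ω, ‖u x‖ₑ = ENNReal.ofReal (∫ x in Ω, |u x|) :=
    (ofReal_integral_norm_eq_lintegral_enorm (hintegrable hu.continuousOn)).symm
  have hgrad : ∫⁻ x in Ω, ‖∇ u x‖ₑ ^ 2 = ENNReal.ofReal (∫ x in Ω, ‖∇ u x‖ ^ 2) := by
    rw [ofReal_integral_eq_lintegral_ofReal (f := fun x => ‖∇ u x‖ ^ 2)
      (hintegrable (hu.continuousOn_gradient.norm.pow 2))
      (Eventually.of_forall fun x => sq_nonneg _)]
    simp_rw [← ofReal_norm, ← ENNReal.ofReal_pow (norm_nonneg _)]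
  have habs_nonneg : 0 ≤ ∫ x in Ω, |u x| := integral_nonneg fun x => abs_nonneg _
  have hδpos := hδ.1
  have hscale : ∫ x in Ω, u x ^ 2 ≤ C.toReal * ((√δ ^ Module.finrank ℝ E)⁻¹
      * (∫ x in Ω, |u x|) ^ 2 + √δ ^ 2 * ∫ x in Ω, ‖∇ u x‖ ^ 2) := by
    have hnashδ := hnash √δ hsqrt u (hu.mono subset_closure)
    rwa [inter_eq_left.2 subset_closure, hsq, habs, hgrad, ← ENNReal.ofReal_toReal hC,
      ← ENNReal.ofReal_pow habs_nonneg, ← ENNReal.ofReal_mul (by positivity),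
      ← ENNReal.ofReal_mul (by positivity), ← ENNReal.ofReal_add (by positivity) (by positivity),
      ← ENNReal.ofReal_mul (by positivity), ENNReal.ofReal_le_ofReal_iff (by positivity)] at hnashδ
  rw [sq_sqrt hδ.1.le] at hscale
  have hle_sqrt : δ ≤ √δ := le_sqrt_of_sq_le (pow_le_of_le_one hδ.1.le hδ1 two_ne_zero)
  refine hscale.trans ?_
  gcongr
  linarith

end NashInequality

section ParametricIntegral

theorem continuousOn_of_uncurry {I X Y : Type*} [TopologicalSpace I] [TopologicalSpace X]
    [TopologicalSpace Y] {J : Set I} {K : Set X} {w : I → X → Y} {t : I}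
    (hw : ContinuousOn (Function.uncurry w) (J ×ˢ K)) (ht : t ∈ J) : ContinuousOn (w t) K :=
  hw.comp (f := fun x => (t, x)) (by fun_prop) fun _ hx => ⟨ht, hx⟩

variable {X : Type*} [TopologicalSpace X] {K S : Set X} {w w' : ℝ → X → ℝ} {a b t : ℝ}
  [T2Space X] [MeasurableSpace X] [OpensMeasurableSpace X] {ν : Measure X}
  [IsFiniteMeasureOnCompacts ν]

theorem continuousOn_setIntegral (hK : IsCompact K) (hS : MeasurableSet S) (hSK : S ⊆ K)
    (hw : ContinuousOn (Function.uncurry w) (Icc a b ×ˢ K)) :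
    ContinuousOn (fun t => ∫ x in S, w t x ∂ν) (Icc a b) := by
  obtain ⟨C, hC⟩ := (isCompact_Icc.prod hK).exists_bound_of_continuousOn hw
  refine continuousOn_of_dominated (bound := fun _ => C) (fun t ht => ?_) (fun t ht => ?_)
    (integrableOn_const ((measure_mono hSK).trans_lt hK.measure_lt_top).ne) ?_
  · exact ((continuousOn_of_uncurry hw ht).integrableOn_compact hK).mono_set hSK
      |>.aestronglyMeasurable
  · filter_upwards [ae_restrict_mem hS] with x hx using hC (t, x) ⟨ht, hSK hx⟩
  · filter_upwards [ae_restrict_mem hS] with x hx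
    exact hw.comp (f := fun t => (t, x)) (by fun_prop) fun t ht => ⟨ht, hSK hx⟩

theorem hasDerivAt_setIntegral (hK : IsCompact K) (hS : MeasurableSet S) (hSK : S ⊆ K)
    (hw : ContinuousOn (Function.uncurry w) (Ioo a b ×ˢ K))
    (hderiv : ∀ t ∈ Ioo a b, ∀ x ∈ K, HasDerivAt (fun s => w s x) (w' t x) t)
    (hw' : ContinuousOn (Function.uncurry w') (Ioo a b ×ˢ K)) (ht : t ∈ Ioo a b) :
    HasDerivAt (fun t => ∫ x in S, w t x ∂ν) (∫ x in S, w' t x ∂ν) t := by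
  obtain ⟨a', ha, hat⟩ := exists_between ht.1
  obtain ⟨b', htb, hb⟩ := exists_between ht.2
  have hsub : Icc a' b' ⊆ Ioo a b := Icc_subset_Ioo ha hb
  have hintegrable : ∀ {f : X → ℝ}, ContinuousOn f K → IntegrableOn f S ν := fun hf =>
    (hf.integrableOn_compact hK).mono_set hSK
  obtain ⟨C, hC⟩ := (isCompact_Icc.prod hK).exists_bound_of_continuousOn
    (hw'.mono (prod_mono_left hsub))
  refine (hasDerivAt_integral_of_dominated_loc_of_deriv_le (F := w) (F' := w')
    (bound := fun _ => C) (Ioo_mem_nhds hat htb) ?_ (hintegrable (continuousOn_of_uncurry hw ht))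
    (hintegrable (continuousOn_of_uncurry hw' ht)).aestronglyMeasurable ?_
    (integrableOn_const ((measure_mono hSK).trans_lt hK.measure_lt_top).ne) ?_).2
  · filter_upwards [Ioo_mem_nhds ht.1 ht.2] with s hs
    exact (hintegrable (continuousOn_of_uncurry hw hs)).aestronglyMeasurable
  · filter_upwards [ae_restrict_mem hS] with x hx s hs
    exact hC (s, x) ⟨Ioo_subset_Icc_self hs, hSK hx⟩
  · filter_upwards [ae_restrict_mem hS] with x hx s hs
    exact hderiv s (hsub (Ioo_subset_Icc_self hs)) x (hSK hx)

end ParametricIntegral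

section DifferentialInequality

variable {f f' φ : ℝ → ℝ} {a b A σ : ℝ}

theorem monotoneOn_Icc_of_hasDerivAt_nonneg (hf : ContinuousOn f (Icc a b))
    (hderiv : ∀ t ∈ Ioo a b, HasDerivAt f (f' t) t) (hf' : ∀ t ∈ Ioo a b, 0 ≤ f' t) :
    MonotoneOn f (Icc a b) :=
  monotoneOn_of_hasDerivWithinAt_nonneg (f' := f') (convex_Icc a b) hf
    (by rw [interior_Icc]; exact fun t ht => (hderiv t ht).hasDerivWithinAt)
    (by rwa [interior_Icc])

theorem hasDerivAt_exp_mul {t : ℝ} (hf : HasDerivAt f (f' t) t) :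
    HasDerivAt (fun s => exp (A * s) * f s) (exp (A * t) * (A * f t + f' t)) t :=
  ((((hasDerivAt_id' t).const_mul A).exp).mul hf).congr_deriv (by ring)

theorem monotoneOn_exp_mul (hf : ContinuousOn f (Icc a b))
    (hderiv : ∀ t ∈ Ioo a b, HasDerivAt f (f' t) t) (hf' : ∀ t ∈ Ioo a b, 0 ≤ A * f t + f' t) :
    MonotoneOn (fun t => exp (A * t) * f t) (Icc a b) :=
  monotoneOn_Icc_of_hasDerivAt_nonneg (ContinuousOn.mul (by fun_prop) hf)
    (fun t ht => hasDerivAt_exp_mul (hderiv t ht)) fun t ht => mul_nonneg (exp_pos _).le (hf' t ht)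

theorem le_exp_mul_add_integral (hab : a ≤ b) (hσ : 0 ≤ σ) (hf : ContinuousOn f (Icc a b))
    (hderiv : ∀ t ∈ Ioo a b, HasDerivAt f (f' t) t) (hφ : ContinuousOn φ (Icc a b))
    (hφ_nonneg : ∀ t ∈ Icc a b, 0 ≤ φ t) (hle : ∀ t ∈ Ioo a b, σ * f t + f' t ≤ φ t) :
    f b ≤ exp (-(σ * (b - a))) * f a + ∫ t in Ioo a b, φ t := by
  have hbound := intervalIntegral.sub_le_integral_of_hasDeriv_right_of_le
    (g := fun t => exp (σ * t) * f t) (φ := fun t => exp (σ * b) * φ t) hab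
    (ContinuousOn.mul (by fun_prop) hf)
    (fun t ht => (hasDerivAt_exp_mul (hderiv t ht)).hasDerivWithinAt)
    ((hφ.const_mul _).integrableOn_compact isCompact_Icc)
    fun t ht => mul_le_mul_of_nonneg
      (exp_le_exp.2 (mul_le_mul_of_nonneg_left ht.2.le hσ)) (hle t ht) (exp_pos _).le
      (hφ_nonneg t (Ioo_subset_Icc_self ht))
  rw [intervalIntegral.integral_const_mul, intervalIntegral.integral_of_le hab,
    integral_Ioc_eq_integral_Ioo, sub_le_iff_le_add'] at hbound
  have hexp : exp (σ * a) = exp (σ * b) * exp (-(σ * (b - a))) := by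
    rw [← exp_add]
    ring_nf
  rw [hexp, mul_assoc, ← mul_add] at hbound
  exact le_of_mul_le_mul_left hbound (exp_pos _)

theorem pow_succ_mul_le_of_le_add {Y Y' : ℝ → ℝ} {k : ℕ} {L τ : ℝ} (hτ : 0 ≤ τ)
    (hY : ContinuousOn Y (Icc 0 τ)) (hderiv : ∀ t ∈ Ioo 0 τ, HasDerivAt Y (Y' t) t)
    (hle : ∀ t ∈ Ioo 0 τ, (k + 1) * (τ - t) ^ k * Y t ≤ L + (τ - t) ^ (k + 1) * Y' t) :
    τ ^ (k + 1) * Y 0 ≤ L * τ := by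
  have hpow : ∀ t, HasDerivAt (fun t => (τ - t) ^ (k + 1)) (-((k + 1) * (τ - t) ^ k)) t :=
    fun t => (((hasDerivAt_id' t).const_sub τ).pow (k + 1)).congr_deriv (by simp)
  have hmono : MonotoneOn (fun t => (τ - t) ^ (k + 1) * Y t + L * t) (Icc 0 τ) :=
    monotoneOn_Icc_of_hasDerivAt_nonneg
      (ContinuousOn.add (ContinuousOn.mul (by fun_prop) hY) (by fun_prop))
      (fun t ht => ((hpow t).mul (hderiv t ht)).add ((hasDerivAt_id' t).const_mul L))
      fun t ht => by linarith [hle t ht]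
  simpa using hmono (left_mem_Icc.2 hτ) (right_mem_Icc.2 hτ) hτ

-- At time `t` the inequality is used with `δ` proportional to `τ - t`.
theorem exists_pow_mul_le_of_forall_scale_le (d : ℕ) {C δ₀ : ℝ} (hC : 0 < C) (hδ₀ : 0 < δ₀) :
    ∃ K > 0, ∃ k : ℕ, ∀ τ ∈ Ioc 0 1, ∀ B ≥ 0, ∀ Y Y' : ℝ → ℝ, ContinuousOn Y (Icc 0 τ) →
      (∀ t ∈ Ioo 0 τ, HasDerivAt Y (Y' t) t) →
      (∀ t ∈ Ioo 0 τ, ∀ δ ∈ Ioc 0 δ₀, Y t ≤ C * ((δ ^ d)⁻¹ * B + δ * Y' t)) →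
      τ ^ k * Y 0 ≤ K * B := by
  obtain ⟨j, hj⟩ := exists_nat_ge (1 / (C * δ₀))
  set k := d + j with hk
  set κ := C * (k + 1) with hκ
  have hκpos : 0 < κ := by positivity
  have hκδ₀ : 1 / κ ≤ δ₀ := by
    rw [div_le_iff₀ (by positivity)] at hj ⊢
    have hjk : (j : ℝ) ≤ k + 1 := by rw [hk]; push_cast; linarith [d.cast_nonneg (α := ℝ)]
    nlinarith [mul_le_mul_of_nonneg_right hjk (mul_pos hC hδ₀).le]
  refine ⟨κ ^ (d + 1), by positivity, k + 1, fun τ hτ B hB Y Y' hY hderiv hscale => ?_⟩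
  refine (pow_succ_mul_le_of_le_add hτ.1.le hY hderiv fun t ht => ?_).trans
    (mul_le_of_le_one_right (by positivity) hτ.2)
  set s := τ - t
  have hs0 : 0 < s := sub_pos.2 ht.2
  have hs1 : s ≤ 1 := by linarith [ht.1, hτ.2]
  calc (k + 1) * s ^ k * Y t
      ≤ (k + 1) * s ^ k * (C * (((s / κ) ^ d)⁻¹ * B + s / κ * Y' t)) := by
        gcongr
        exact hscale t ht _ ⟨by positivity, (by gcongr : s / κ ≤ 1 / κ).trans hκδ₀⟩
    _ = κ ^ (d + 1) * B * s ^ j + s ^ (k + 1) * Y' t := by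
        rw [hk, div_pow, inv_div, hκ]
        field_simp
        ring
    _ ≤ κ ^ (d + 1) * B + s ^ (k + 1) * Y' t := by
        gcongr ?_ + _
        exact mul_le_of_le_one_right (by positivity) (pow_le_one₀ hs0.le hs1)

end DifferentialInequality

section GreenInequalities

variable {E : Type*} [NormedAddCommGroup E] [InnerProductSpace ℝ E] [FiniteDimensional ℝ E]
  {Ω : Set E} {η u ψ : E → ℝ} {μ : ℝ} {x : E}

theorem gradient_exp_mul (hη : DifferentiableAt ℝ η x) :
    ∇ (fun y => exp (μ * η y)) x = (μ * exp (μ * η x)) • ∇ η x := by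
  refine HasGradientAt.gradient ?_
  rw [hasGradientAt_iff_hasFDerivAt, map_smul]
  refine ((hη.hasGradientAt.hasFDerivAt.const_mul μ).exp).congr_fderiv ?_
  rw [smul_smul, mul_comm]

theorem laplacian_exp_mul (hη : ContDiff ℝ 2 η) :
    divergence (∇ fun y => exp (μ * η y)) x
      = exp (μ * η x) * (μ ^ 2 * ‖∇ η x‖ ^ 2 + μ * divergence (∇ η) x) := by
  have hηdiff : Differentiable ℝ η := hη.differentiable two_ne_zero
  have hgrad : ∇ (fun y => μ * exp (μ * η y)) x = (μ ^ 2 * exp (μ * η x)) • ∇ η x := by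
    refine HasGradientAt.gradient ?_
    rw [hasGradientAt_iff_hasFDerivAt, map_smul]
    refine ((((hηdiff x).hasGradientAt.hasFDerivAt.const_mul μ).exp).const_mul μ).congr_fderiv ?_
    rw [smul_smul, smul_smul]
    ring_nf
  have hfield : ∇ (fun y => exp (μ * η y)) = fun y => (μ * exp (μ * η y)) • ∇ η y :=
    funext fun y => gradient_exp_mul (hηdiff y)
  rw [hfield, divergence_smul (by fun_prop)
    ((contDiff_one_gradient hη).differentiable one_ne_zero x), hgrad, real_inner_smul_left,
    real_inner_self_eq_norm_sq]
  ring

variable [MeasurableSpace E] [BorelSpace E]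

theorem IsDefiningFunction.integral_mul_laplacian_add_norm_sq_nonpos
    (hη : IsDefiningFunction η Ω) (hu : C1On u (closure Ω)) (hu' : C1On (∇ u) (closure Ω))
    (hflux : ∀ x ∈ frontier Ω, 0 ≤ ⟪u x • ∇ u x, ∇ η x⟫) :
    ∫ x in Ω, (u x * divergence (∇ u) x + ‖∇ u x‖ ^ 2) ≤ 0 := by
  refine (setIntegral_congr_fun hη.isOpen.measurableSet fun x hx => ?_).trans_le
    (hη.integral_divergence_nonpos (hu.smul hu') hflux)
  have hxΩ := subset_closure hx
  simp only [divergence_smul (hu.differentiableAt x hxΩ) (hu'.differentiableAt x hxΩ),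
    real_inner_self_eq_norm_sq]

theorem IsDefiningFunction.integral_mul_laplacian_sub_nonpos (hη : IsDefiningFunction η Ω)
    (hu : C1On u (closure Ω)) (hu' : C1On (∇ u) (closure Ω))
    (hψ : C1On ψ (closure Ω)) (hψ' : C1On (∇ ψ) (closure Ω))
    (hflux : ∀ x ∈ frontier Ω, 0 ≤ ⟪u x • ∇ ψ x - ψ x • ∇ u x, ∇ η x⟫) :
    ∫ x in Ω, (u x * divergence (∇ ψ) x - ψ x * divergence (∇ u) x) ≤ 0 := by
  refine (setIntegral_congr_fun hη.isOpen.measurableSet fun x hx => ?_).trans_le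
    (hη.integral_divergence_nonpos ((hu.smul hψ').sub (hψ.smul hu')) hflux)
  have hxΩ := subset_closure hx
  have hu_diff := hu.differentiableAt x hxΩ
  have hψ_diff := hψ.differentiableAt x hxΩ
  have hu'_diff := hu'.differentiableAt x hxΩ
  have hψ'_diff := hψ'.differentiableAt x hxΩ
  have hdiv := divergence_sub (hu_diff.fun_smul hψ'_diff) (hψ_diff.fun_smul hu'_diff)
  rw [divergence_smul hu_diff hψ'_diff, divergence_smul hψ_diff hu'_diff,
    real_inner_comm (∇ ψ x)] at hdiv
  linarith

end GreenInequalities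

section NeumannSolution

/-- The partial derivative `∂ₜq` of a time-dependent function `q`, with the time as its first
argument. -/
noncomputable def timeDeriv {X : Type*} (q : ℝ → X → ℝ) (t : ℝ) (x : X) : ℝ :=
  deriv (fun s => q s x) t

variable {E : Type*} [NormedAddCommGroup E] [InnerProductSpace ℝ E] [FiniteDimensional ℝ E]
  {Ω : Set E} {η : E → ℝ} {T A t : ℝ} {q : ℝ → E → ℝ}

/-- Nonnegative classical solutions of the differential inequality `|∂ₜq + Δq| ≤ A q` on
`(0, T) × Ω` with homogeneous Neumann boundary condition, where `∇ η` plays the role of the normal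
to the boundary. Every solution of `-∂ₜq - Δq + a q = 0` with `|a| ≤ A` is one. -/
structure IsNeumannSolution (Ω : Set E) (η : E → ℝ) (T A : ℝ) (q : ℝ → E → ℝ) : Prop where
  continuousOn : ContinuousOn (Function.uncurry q) (Icc 0 T ×ˢ closure Ω)
  nonneg : ∀ t ∈ Icc 0 T, ∀ x ∈ closure Ω, 0 ≤ q t x
  differentiableAt_time : ∀ t ∈ Ioo 0 T, ∀ x ∈ closure Ω, DifferentiableAt ℝ (fun s => q s x) t
  continuousOn_timeDeriv : ContinuousOn (Function.uncurry (timeDeriv q)) (Ioo 0 T ×ˢ closure Ω)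
  c1On : ∀ t ∈ Ioo 0 T, C1On (q t) (closure Ω)
  c1On_gradient : ∀ t ∈ Ioo 0 T, C1On (∇ (q t)) (closure Ω)
  abs_timeDeriv_add_laplacian_le : ∀ t ∈ Ioo 0 T, ∀ x ∈ Ω,
    |timeDeriv q t x + divergence (∇ (q t)) x| ≤ A * q t x
  neumann : ∀ t ∈ Ioo 0 T, ∀ x ∈ frontier Ω, ⟪∇ (q t) x, ∇ η x⟫ = 0

namespace IsNeumannSolution

theorem continuousOn_slice (hq : IsNeumannSolution Ω η T A q) (ht : t ∈ Icc 0 T) :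
    ContinuousOn (q t) (closure Ω) :=
  continuousOn_of_uncurry hq.continuousOn ht

theorem continuousOn_laplacian (hq : IsNeumannSolution Ω η T A q) (ht : t ∈ Ioo 0 T) :
    ContinuousOn (divergence (∇ (q t))) (closure Ω) :=
  (hq.c1On_gradient t ht).continuousOn_divergence

theorem continuousOn_timeDeriv_slice (hq : IsNeumannSolution Ω η T A q) (ht : t ∈ Ioo 0 T) :
    ContinuousOn (timeDeriv q t) (closure Ω) :=
  continuousOn_of_uncurry hq.continuousOn_timeDeriv ht

variable [MeasurableSpace E] [BorelSpace E]

theorem continuousOn_setIntegral_mul (hq : IsNeumannSolution Ω η T A q)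
    (hη : IsDefiningFunction η Ω) {ψ : E → ℝ} (hψ : Continuous ψ) :
    ContinuousOn (fun t => ∫ x in Ω, ψ x * q t x) (Icc 0 T) :=
  continuousOn_setIntegral hη.isBounded.isCompact_closure hη.isOpen.measurableSet subset_closure
    ((hψ.comp continuous_snd).continuousOn.mul hq.continuousOn)

theorem hasDerivAt_setIntegral_mul (hq : IsNeumannSolution Ω η T A q)
    (hη : IsDefiningFunction η Ω) {ψ : E → ℝ} (hψ : Continuous ψ) (ht : t ∈ Ioo 0 T) :
    HasDerivAt (fun t => ∫ x in Ω, ψ x * q t x) (∫ x in Ω, ψ x * timeDeriv q t x) t :=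
  hasDerivAt_setIntegral (w := fun t x => ψ x * q t x) (w' := fun t x => ψ x * timeDeriv q t x)
    hη.isBounded.isCompact_closure hη.isOpen.measurableSet subset_closure
    ((hψ.comp continuous_snd).continuousOn.mul
      (hq.continuousOn.mono (prod_mono_left Ioo_subset_Icc_self)))
    (fun t ht x hx => (hq.differentiableAt_time t ht x hx).hasDerivAt.const_mul (ψ x))
    ((hψ.comp continuous_snd).continuousOn.mul hq.continuousOn_timeDeriv) ht

theorem continuousOn_setIntegral_sq (hq : IsNeumannSolution Ω η T A q)
    (hη : IsDefiningFunction η Ω) : ContinuousOn (fun t => ∫ x in Ω, q t x ^ 2) (Icc 0 T) :=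
  continuousOn_setIntegral hη.isBounded.isCompact_closure hη.isOpen.measurableSet subset_closure
    (hq.continuousOn.pow 2)

theorem hasDerivAt_setIntegral_sq (hq : IsNeumannSolution Ω η T A q)
    (hη : IsDefiningFunction η Ω) (ht : t ∈ Ioo 0 T) :
    HasDerivAt (fun t => ∫ x in Ω, q t x ^ 2) (∫ x in Ω, 2 * (q t x * timeDeriv q t x)) t := by
  have hcont := hq.continuousOn.mono (prod_mono_left Ioo_subset_Icc_self)
  exact hasDerivAt_setIntegral (w := fun t x => q t x ^ 2)
    (w' := fun t x => 2 * (q t x * timeDeriv q t x)) hη.isBounded.isCompact_closure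
    hη.isOpen.measurableSet subset_closure (hcont.pow 2)
    (fun t ht x hx => ((hq.differentiableAt_time t ht x hx).hasDerivAt.pow 2).congr_deriv
      (by simp only [timeDeriv]; ring))
    ((hcont.mul hq.continuousOn_timeDeriv).const_mul 2) ht

theorem setIntegral_slice_nonneg (hq : IsNeumannSolution Ω η T A q) {S : Set E}
    (hS : MeasurableSet S) (hSΩ : S ⊆ closure Ω) (ht : t ∈ Icc 0 T) : 0 ≤ ∫ x in S, q t x :=
  setIntegral_nonneg hS fun x hx => hq.nonneg t ht x (hSΩ hx)

theorem monotoneOn_exp_mul_setIntegral (hq : IsNeumannSolution Ω η T A q)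
    (hη : IsDefiningFunction η Ω) :
    MonotoneOn (fun t => exp (A * t) * ∫ x in Ω, q t x) (Icc 0 T) := by
  have hmeas := hη.isOpen.measurableSet
  have hcont := hq.continuousOn_setIntegral_mul hη (ψ := fun _ => 1) continuous_const
  have hderiv := fun t => hq.hasDerivAt_setIntegral_mul hη (ψ := fun _ => 1) (t := t)
    continuous_const
  simp only [one_mul] at hcont hderiv
  refine monotoneOn_exp_mul hcont hderiv fun t ht => ?_
  have hq_int := hη.integrableOn (hq.continuousOn_slice (Ioo_subset_Icc_self ht))
  have hqt_int := hη.integrableOn (hq.continuousOn_timeDeriv_slice ht)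
  have hlap_int := hη.integrableOn (hq.continuousOn_laplacian ht)
  have hlap := hη.integral_divergence_nonpos (hq.c1On_gradient t ht)
    fun x hx => (hq.neumann t ht x hx).ge
  calc 0 ≤ -∫ x in Ω, divergence (∇ (q t)) x := by linarith
    _ = ∫ x in Ω, -divergence (∇ (q t)) x := (integral_neg _).symm
    _ ≤ ∫ x in Ω, (A * q t x + timeDeriv q t x) :=
        setIntegral_mono_on hlap_int.neg ((hq_int.const_mul A).add hqt_int) hmeas fun x hx => by
          linarith [neg_le_of_abs_le (hq.abs_timeDeriv_add_laplacian_le t ht x hx)]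
    _ = A * (∫ x in Ω, q t x) + ∫ x in Ω, timeDeriv q t x := by
        rw [integral_add (hq_int.const_mul A) hqt_int, integral_const_mul]

theorem two_mul_integral_norm_gradient_sq_le (hq : IsNeumannSolution Ω η T A q)
    (hη : IsDefiningFunction η Ω) (ht : t ∈ Ioo 0 T) :
    2 * ∫ x in Ω, ‖∇ (q t) x‖ ^ 2
      ≤ 2 * A * (∫ x in Ω, q t x ^ 2) + ∫ x in Ω, 2 * (q t x * timeDeriv q t x) := by
  have hq_cont := hq.continuousOn_slice (Ioo_subset_Icc_self ht)
  have hlap_int := hη.integrableOn (hq_cont.fun_mul (hq.continuousOn_laplacian ht))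
  have hgrad_int := hη.integrableOn ((hq.c1On t ht).continuousOn_gradient.norm.fun_pow 2)
  have hsq_int := hη.integrableOn (hq_cont.fun_pow 2)
  have hqt_int := hη.integrableOn (hq_cont.fun_mul (hq.continuousOn_timeDeriv_slice ht))
  have hgreen : (∫ x in Ω, q t x * divergence (∇ (q t)) x) + ∫ x in Ω, ‖∇ (q t) x‖ ^ 2 ≤ 0 := by
    rw [← integral_add hlap_int hgrad_int]
    exact hη.integral_mul_laplacian_add_norm_sq_nonpos (hq.c1On t ht) (hq.c1On_gradient t ht)
      fun x hx => by rw [real_inner_smul_left, hq.neumann t ht x hx, mul_zero]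
  have hpde : -∫ x in Ω, q t x * divergence (∇ (q t)) x
      ≤ A * (∫ x in Ω, q t x ^ 2) + ∫ x in Ω, q t x * timeDeriv q t x := by
    rw [← integral_neg, ← integral_const_mul, ← integral_add (hsq_int.const_mul A) hqt_int]
    refine setIntegral_mono_on hlap_int.neg ((hsq_int.const_mul A).add hqt_int)
      hη.isOpen.measurableSet fun x hx => ?_
    have hlower := neg_le_of_abs_le (hq.abs_timeDeriv_add_laplacian_le t ht x hx)
    have hmul := mul_le_mul_of_nonneg_left hlower
      (hq.nonneg t (Ioo_subset_Icc_self ht) x (subset_closure hx))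
    linarith
  rw [integral_const_mul]
  linarith

end IsNeumannSolution

end NeumannSolution

section Smoothing

variable {E : Type*} [NormedAddCommGroup E] [InnerProductSpace ℝ E] [FiniteDimensional ℝ E]
  [MeasurableSpace E] [BorelSpace E] {Ω : Set E} {η : E → ℝ}

theorem IsNeumannSolution.exp_mul_integral_sq_le {T A τ t C c δ : ℝ} {q : ℝ → E → ℝ}
    (hq : IsNeumannSolution Ω η T A q) (hη : IsDefiningFunction η Ω) (hC : 0 ≤ C) (hc : 0 ≤ c)
    (hδ : 0 ≤ δ) (ht : t ∈ Ioo 0 τ) (hτT : τ ≤ T)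
    (hnash : ∫ x in Ω, q t x ^ 2
      ≤ C * (c * (∫ x in Ω, |q t x|) ^ 2 + δ * ∫ x in Ω, ‖∇ (q t) x‖ ^ 2)) :
    exp (2 * A * t) * ∫ x in Ω, q t x ^ 2
      ≤ C * (c * (exp (A * τ) * ∫ x in Ω, q τ x) ^ 2
        + δ * (exp (2 * A * t) * (2 * A * (∫ x in Ω, q t x ^ 2)
          + ∫ x in Ω, 2 * (q t x * timeDeriv q t x)))) := by
  have htT : t ∈ Ioo 0 T := ⟨ht.1, ht.2.trans_le hτT⟩
  have habs : ∫ x in Ω, |q t x| = ∫ x in Ω, q t x :=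
    setIntegral_congr_fun hη.isOpen.measurableSet fun x hx =>
      abs_of_nonneg (hq.nonneg t (Ioo_subset_Icc_self htT) x (subset_closure hx))
  have hmass_nonneg : 0 ≤ ∫ x in Ω, q t x :=
    hq.setIntegral_slice_nonneg hη.isOpen.measurableSet subset_closure (Ioo_subset_Icc_self htT)
  have hmass : exp (A * t) * ∫ x in Ω, q t x ≤ exp (A * τ) * ∫ x in Ω, q τ x :=
    hq.monotoneOn_exp_mul_setIntegral hη (Ioo_subset_Icc_self htT)
      ⟨(ht.1.trans ht.2).le, hτT⟩ ht.2.le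
  have henergy := hq.two_mul_integral_norm_gradient_sq_le hη htT
  have hgrad_nonneg : 0 ≤ ∫ x in Ω, ‖∇ (q t) x‖ ^ 2 := integral_nonneg fun x => by positivity
  have hexp : exp (2 * A * t) = exp (A * t) ^ 2 := by rw [← exp_nat_mul]; push_cast; ring_nf
  rw [habs] at hnash
  calc exp (2 * A * t) * ∫ x in Ω, q t x ^ 2
      ≤ exp (2 * A * t)
        * (C * (c * (∫ x in Ω, q t x) ^ 2 + δ * ∫ x in Ω, ‖∇ (q t) x‖ ^ 2)) := by gcongr
    _ = C * (c * (exp (A * t) * ∫ x in Ω, q t x) ^ 2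
        + δ * (exp (2 * A * t) * ∫ x in Ω, ‖∇ (q t) x‖ ^ 2)) := by rw [hexp]; ring
    _ ≤ _ := by
        gcongr
        linarith

theorem IsDefiningFunction.exists_integral_sq_le_exp_mul_integral (hη : IsDefiningFunction η Ω) :
    ∃ C > 0, ∀ (T A : ℝ) (q : ℝ → E → ℝ), IsNeumannSolution Ω η T A q →
      ∀ τ ∈ Ioc 0 1, τ ≤ T → ∫ x in Ω, q 0 x ^ 2
        ≤ exp (C * (1 + 1 / τ)) * (exp (A * τ) * ∫ x in Ω, q τ x) ^ 2 := by
  obtain ⟨C, hC, δ₀, hδ₀, hnash⟩ := exists_nash_inequality hη.isOpen hη.isBounded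
    fun x hx => hη.uniformConeAt hx
  obtain ⟨K, hK, k, hpow⟩ := exists_pow_mul_le_of_forall_scale_le (Module.finrank ℝ E) hC hδ₀
  refine ⟨K + k, by positivity, fun T A q hq τ hτ hτT => ?_⟩
  have hτ0 : 0 < τ := hτ.1
  set B := (exp (A * τ) * ∫ x in Ω, q τ x) ^ 2
  have hdecay : τ ^ k * (exp (2 * A * 0) * ∫ x in Ω, q 0 x ^ 2) ≤ K * B := by
    refine hpow τ hτ B (sq_nonneg _) (fun t => exp (2 * A * t) * ∫ x in Ω, q t x ^ 2) _
      (ContinuousOn.mul (by fun_prop)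
        ((hq.continuousOn_setIntegral_sq hη).mono (Icc_subset_Icc_right hτT)))
      (fun t ht => hasDerivAt_exp_mul (f' := fun t => ∫ x in Ω, 2 * (q t x * timeDeriv q t x))
        (hq.hasDerivAt_setIntegral_sq hη ⟨ht.1, ht.2.trans_le hτT⟩)) fun t ht δ hδ => ?_
    exact hq.exp_mul_integral_sq_le hη hC.le (inv_nonneg.2 (pow_nonneg hδ.1.le _)) hδ.1.le ht hτT
      (hnash δ hδ _ (hq.c1On t ⟨ht.1, ht.2.trans_le hτT⟩))
  have hτk : 1 / τ ^ k ≤ exp (k * (1 / τ)) := by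
    rw [exp_nat_mul, ← one_div_pow]
    gcongr
    linarith [add_one_le_exp (1 / τ)]
  have hKexp : K ≤ exp K := by linarith [add_one_le_exp K]
  simp only [mul_zero, exp_zero, one_mul] at hdecay
  calc ∫ x in Ω, q 0 x ^ 2 ≤ K * (1 / τ ^ k) * B := by
        rw [mul_one_div, div_mul_eq_mul_div, le_div_iff₀' (pow_pos hτ0 k)]
        exact hdecay
    _ ≤ exp K * exp (k * (1 / τ)) * B := by gcongr
    _ ≤ exp ((K + k) * (1 + 1 / τ)) * B := by
        rw [← exp_add]
        gcongr
        nlinarith [mul_nonneg hK.le (one_div_pos.2 hτ0).le, k.cast_nonneg (α := ℝ)]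

end Smoothing

section WeightedObservability

variable {E : Type*} [NormedAddCommGroup E] [InnerProductSpace ℝ E] [FiniteDimensional ℝ E]
  {Ω ω : Set E} {η : E → ℝ} {c K M T A μ σ t t₀ : ℝ} {q : ℝ → E → ℝ} {x : E}

/-- Quantitative bounds on the function `η` from which the weights `exp (μ * η)` are built: its
gradient is bounded below by `c` off the observation set `ω`, its Laplacian below by `-K`, and the
function itself above by `M`. -/
structure HasWeightBounds (η : E → ℝ) (Ω ω : Set E) (c K M : ℝ) : Prop where
  gradientBound_pos : 0 < c
  laplacianBound_nonneg : 0 ≤ K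
  bound_nonneg : 0 ≤ M
  le_norm_gradient : ∀ x ∈ Ω \ ω, c ≤ ‖∇ η x‖
  neg_le_laplacian : ∀ x ∈ Ω, -K ≤ divergence (∇ η) x
  le_bound : ∀ x ∈ Ω, η x ≤ M

theorem IsDefiningFunction.exists_hasWeightBounds (hη : IsDefiningFunction η Ω)
    (hgrad : ∀ x ∈ closure (Ω \ ω), ∇ η x ≠ 0) : ∃ c K M, HasWeightBounds η Ω ω c K M := by
  have hcompact := hη.isBounded.isCompact_closure
  obtain ⟨c, hc, hcle⟩ := (hη.isBounded.subset sdiff_subset).isCompact_closure.exists_forall_le'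
    hη.contDiff_gradient.continuous.norm.continuousOn fun x hx => norm_pos_iff.2 (hgrad x hx)
  obtain ⟨K, hK⟩ := hcompact.exists_bound_of_continuousOn
    (C1On.of_contDiff hη.contDiff_gradient (closure Ω)).continuousOn_divergence
  obtain ⟨M, hM⟩ := hcompact.exists_bound_of_continuousOn hη.continuous.continuousOn
  exact ⟨c, max K 0, max M 0, hc, le_max_right _ _, le_max_right _ _,
    fun x hx => hcle x (subset_closure hx),
    fun x hx => neg_le_of_abs_le ((hK x (subset_closure hx)).trans (le_max_left _ _)),
    fun x hx => (le_abs_self _).trans ((hM x (subset_closure hx)).trans (le_max_left _ _))⟩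

theorem HasWeightBounds.exists_weight_parameters (hw : HasWeightBounds η Ω ω c K M) :
    ∃ C > 0, ∀ A ≥ 0, ∀ d > 0,
      A + (A + (C * (1 + √A + 1 / d) * M + 1) / d) + C * (1 + √A + 1 / d) * K
        ≤ (C * (1 + √A + 1 / d) * c) ^ 2 := by
  have hc := hw.gradientBound_pos
  have hK := hw.laplacianBound_nonneg
  have hM := hw.bound_nonneg
  refine ⟨1 + (K + M + 3) / c ^ 2, by positivity, fun A hA d hd => ?_⟩
  set C := 1 + (K + M + 3) / c ^ 2 with hC
  set X := 1 + √A + 1 / d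
  have hC1 : 1 ≤ C := le_add_of_nonneg_right (by positivity)
  have hCc : K + M + 3 ≤ C * c ^ 2 := by
    rw [hC, add_mul, div_mul_cancel₀ _ (by positivity)]
    linarith [sq_nonneg c]
  have hd' : 0 ≤ 1 / d := by positivity
  have hX1 : 1 ≤ X := by linarith [sqrt_nonneg A]
  have hAX : A ≤ X ^ 2 := by
    rw [← sq_sqrt hA]
    gcongr
    linarith
  have hdX : 1 / d ≤ X := by linarith [sqrt_nonneg A]
  calc A + (A + (C * X * M + 1) / d) + C * X * K
      = 2 * A + (C * X * M + 1) * (1 / d) + C * X * K := by ring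
    _ ≤ 2 * X ^ 2 + (C * X * M + 1) * X + C * X * (K * X) := by
        gcongr
        exact le_mul_of_one_le_right hK hX1
    _ = 2 * X ^ 2 + X + C * X ^ 2 * (K + M) := by ring
    _ ≤ 3 * (C * X ^ 2) + C * X ^ 2 * (K + M) := by nlinarith
    _ = C * X ^ 2 * (K + M + 3) := by ring
    _ ≤ C * X ^ 2 * (C * c ^ 2) := by gcongr
    _ = (C * X * c) ^ 2 := by ring

theorem HasWeightBounds.mul_add_timeDeriv_sub_le_indicator (hw : HasWeightBounds η Ω ω c K M)
    (hη : ContDiff ℝ 2 η) (hq : IsNeumannSolution Ω η T A q) (hμ : 0 ≤ μ)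
    (hσ : A + σ + μ * K ≤ (μ * c) ^ 2) (ht : t ∈ Ioo 0 T) (hx : x ∈ Ω) :
    σ * (exp (μ * η x) * q t x) + exp (μ * η x) * timeDeriv q t x
        - (q t x * divergence (∇ fun y => exp (μ * η y)) x
          - exp (μ * η x) * divergence (∇ (q t)) x)
      ≤ ω.indicator (fun y => exp (μ * M) * (μ * c) ^ 2 * q t y) x := by
  have hq_nonneg := hq.nonneg t (Ioo_subset_Icc_self ht) x (subset_closure hx)
  have hpde := (abs_le.1 (hq.abs_timeDeriv_add_laplacian_le t ht x hx)).2
  have hlap : q t x * (-(μ * K)) ≤ q t x * (μ * divergence (∇ η) x) := by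
    rw [← mul_neg]
    gcongr
    exact hw.neg_le_laplacian x hx
  have hbound : σ * (exp (μ * η x) * q t x) + exp (μ * η x) * timeDeriv q t x
      - (q t x * divergence (∇ fun y => exp (μ * η y)) x - exp (μ * η x) * divergence (∇ (q t)) x)
      ≤ exp (μ * η x) * (((μ * c) ^ 2 - (μ * ‖∇ η x‖) ^ 2) * q t x) := by
    rw [laplacian_exp_mul hη]
    calc _ = exp (μ * η x) * (σ * q t x + (timeDeriv q t x + divergence (∇ (q t)) x)
          - (μ * ‖∇ η x‖) ^ 2 * q t x - q t x * (μ * divergence (∇ η) x)) := by ring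
      _ ≤ _ := by
        gcongr
        linarith [mul_le_mul_of_nonneg_right hσ hq_nonneg]
  refine hbound.trans ?_
  by_cases hxω : x ∈ ω
  · rw [indicator_of_mem hxω, mul_assoc]
    have hηM := hw.le_bound x hx
    calc exp (μ * η x) * (((μ * c) ^ 2 - (μ * ‖∇ η x‖) ^ 2) * q t x)
        ≤ exp (μ * η x) * ((μ * c) ^ 2 * q t x) := by
          gcongr
          linarith [sq_nonneg (μ * ‖∇ η x‖)]
      _ ≤ exp (μ * M) * ((μ * c) ^ 2 * q t x) := by gcongr
  · rw [indicator_of_notMem hxω]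
    have hgrad : (μ * c) ^ 2 ≤ (μ * ‖∇ η x‖) ^ 2 := by
      have hc := hw.gradientBound_pos
      gcongr
      exact hw.le_norm_gradient x ⟨hx, hxω⟩
    exact mul_nonpos_of_nonneg_of_nonpos (exp_pos _).le
      (mul_nonpos_of_nonpos_of_nonneg (sub_nonpos.2 hgrad) hq_nonneg)

variable [MeasurableSpace E] [BorelSpace E]

-- The Neumann condition and the fact that `η` decreases towards the boundary give the flux of
-- `q ∇ψ - ψ ∇q`, with `ψ = exp (μ * η)`, the sign required by Green's inequality.
theorem IsNeumannSolution.integral_mul_laplacian_exp_sub_nonpos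
    (hq : IsNeumannSolution Ω η T A q) (hη : IsDefiningFunction η Ω) (hμ : 0 ≤ μ)
    (ht : t ∈ Ioo 0 T) :
    ∫ x in Ω, (q t x * divergence (∇ fun y => exp (μ * η y)) x
      - exp (μ * η x) * divergence (∇ (q t)) x) ≤ 0 := by
  have hψ : ContDiff ℝ 2 fun y => exp (μ * η y) := (hη.contDiff.const_smul μ).exp
  refine hη.integral_mul_laplacian_sub_nonpos (hq.c1On t ht) (hq.c1On_gradient t ht)
    (.of_contDiff (hψ.of_le one_le_two) _) (.of_contDiff (contDiff_one_gradient hψ) _)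
    fun x hx => ?_
  rw [gradient_exp_mul (hη.contDiff.differentiable two_ne_zero x), inner_sub_left,
    real_inner_smul_left, real_inner_smul_left, real_inner_smul_left, hq.neumann t ht x hx,
    mul_zero, sub_zero, real_inner_self_eq_norm_sq]
  have := hq.nonneg t (Ioo_subset_Icc_self ht) x (frontier_subset_closure hx)
  positivity

theorem IsNeumannSolution.mul_integral_exp_mul_add_le (hq : IsNeumannSolution Ω η T A q)
    (hη : IsDefiningFunction η Ω) (hw : HasWeightBounds η Ω ω c K M) (hω : MeasurableSet ω)
    (hωΩ : ω ⊆ Ω) (hμ : 0 ≤ μ) (hσ : A + σ + μ * K ≤ (μ * c) ^ 2) (ht : t ∈ Ioo 0 T) :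
    σ * (∫ x in Ω, exp (μ * η x) * q t x) + ∫ x in Ω, exp (μ * η x) * timeDeriv q t x
      ≤ exp (μ * M) * (μ * c) ^ 2 * ∫ x in ω, q t x := by
  have hψ : ContDiff ℝ 2 fun y => exp (μ * η y) := (hη.contDiff.const_smul μ).exp
  have hψ_cont := hψ.continuous.continuousOn (s := closure Ω)
  have hψ_lap := (C1On.of_contDiff (contDiff_one_gradient hψ) (closure Ω)).continuousOn_divergence
  have hq_cont := hq.continuousOn_slice (Ioo_subset_Icc_self ht)
  have hq_int := hη.integrableOn (hψ_cont.fun_mul hq_cont)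
  have hqt_int := hη.integrableOn (hψ_cont.fun_mul (hq.continuousOn_timeDeriv_slice ht))
  have hgreen_int := hη.integrableOn
    ((hq_cont.fun_mul hψ_lap).fun_sub (hψ_cont.fun_mul (hq.continuousOn_laplacian ht)))
  have hsum_int := (hq_int.const_mul σ).fun_add hqt_int
  calc σ * (∫ x in Ω, exp (μ * η x) * q t x) + ∫ x in Ω, exp (μ * η x) * timeDeriv q t x
      = ∫ x in Ω, (σ * (exp (μ * η x) * q t x) + exp (μ * η x) * timeDeriv q t x) := by
        rw [integral_add (hq_int.const_mul σ) hqt_int, integral_const_mul]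
    _ ≤ ∫ x in Ω, (σ * (exp (μ * η x) * q t x) + exp (μ * η x) * timeDeriv q t x
        - (q t x * divergence (∇ fun y => exp (μ * η y)) x
          - exp (μ * η x) * divergence (∇ (q t)) x)) := by
        rw [integral_sub hsum_int hgreen_int]
        linarith [hq.integral_mul_laplacian_exp_sub_nonpos hη hμ ht]
    _ ≤ ∫ x in Ω, ω.indicator (fun y => exp (μ * M) * (μ * c) ^ 2 * q t y) x :=
        setIntegral_mono_on (hsum_int.sub hgreen_int)
          (((hη.integrableOn hq_cont).const_mul _).indicator hω) hη.isOpen.measurableSet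
          fun x hx => hw.mul_add_timeDeriv_sub_le_indicator hη.contDiff hq hμ hσ ht hx
    _ = exp (μ * M) * (μ * c) ^ 2 * ∫ x in ω, q t x := by
        rw [setIntegral_indicator hω, inter_eq_self_of_subset_right hωΩ, integral_const_mul]

theorem IsNeumannSolution.continuousOn_setIntegral_slice (hq : IsNeumannSolution Ω η T A q)
    (hη : IsDefiningFunction η Ω) (hω : MeasurableSet ω) (hωΩ : ω ⊆ Ω) :
    ContinuousOn (fun t => ∫ x in ω, q t x) (Icc 0 T) :=
  continuousOn_setIntegral hη.isBounded.isCompact_closure hω (hωΩ.trans subset_closure)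
    hq.continuousOn

theorem IsNeumannSolution.integral_le_integral_exp_mul (hq : IsNeumannSolution Ω η T A q)
    (hη : IsDefiningFunction η Ω) (hμ : 0 ≤ μ) (ht : t ∈ Icc 0 T) :
    ∫ x in Ω, q t x ≤ ∫ x in Ω, exp (μ * η x) * q t x := by
  have hq_cont := hq.continuousOn_slice ht
  have hψ : Continuous fun x => exp (μ * η x) := (hη.continuous.const_mul μ).rexp
  exact setIntegral_mono_on (hη.integrableOn hq_cont)
    (hη.integrableOn (hψ.continuousOn.mul hq_cont)) hη.isOpen.measurableSet fun x hx =>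
      le_mul_of_one_le_left (hq.nonneg t ht x (subset_closure hx))
        (one_le_exp (mul_nonneg hμ (hη.pos x hx).le))

theorem IsNeumannSolution.integral_exp_mul_le (hq : IsNeumannSolution Ω η T A q)
    (hη : IsDefiningFunction η Ω) (hw : HasWeightBounds η Ω ω c K M) (hμ : 0 ≤ μ)
    (ht : t ∈ Icc 0 T) :
    ∫ x in Ω, exp (μ * η x) * q t x ≤ exp (μ * M) * ∫ x in Ω, q t x := by
  have hq_cont := hq.continuousOn_slice ht
  have hψ : Continuous fun x => exp (μ * η x) := (hη.continuous.const_mul μ).rexp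
  rw [← integral_const_mul]
  exact setIntegral_mono_on (hη.integrableOn (hψ.continuousOn.mul hq_cont))
    ((hη.integrableOn hq_cont).const_mul _) hη.isOpen.measurableSet fun x hx =>
      mul_le_mul_of_nonneg_right (exp_le_exp.2 (mul_le_mul_of_nonneg_left (hw.le_bound x hx) hμ))
        (hq.nonneg t ht x (subset_closure hx))

theorem IsNeumannSolution.integral_le_exp_mul_integral_add (hq : IsNeumannSolution Ω η T A q)
    (hη : IsDefiningFunction η Ω) (hw : HasWeightBounds η Ω ω c K M) (hω : MeasurableSet ω)
    (hωΩ : ω ⊆ Ω) (hμ : 0 ≤ μ) (hσ_nonneg : 0 ≤ σ) (hσ : A + σ + μ * K ≤ (μ * c) ^ 2)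
    (ht₀ : t₀ ∈ Icc 0 T) :
    ∫ x in Ω, q T x ≤ exp (μ * M - σ * (T - t₀)) * (∫ x in Ω, q t₀ x)
      + exp (μ * M) * (μ * c) ^ 2 * ∫ t in Ioo 0 T, ∫ x in ω, q t x := by
  have hψ : Continuous fun x => exp (μ * η x) := (hη.continuous.const_mul μ).rexp
  have hobs_cont := hq.continuousOn_setIntegral_slice hη hω hωΩ
  have hobs_nonneg : ∀ t ∈ Icc 0 T, 0 ≤ ∫ x in ω, q t x :=
    fun t ht => hq.setIntegral_slice_nonneg hω (hωΩ.trans subset_closure) ht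
  have hgronwall := le_exp_mul_add_integral ht₀.2 hσ_nonneg
    ((hq.continuousOn_setIntegral_mul hη hψ).mono (Icc_subset_Icc_left ht₀.1))
    (fun t ht => hq.hasDerivAt_setIntegral_mul hη hψ ⟨ht₀.1.trans_lt ht.1, ht.2⟩)
    ((hobs_cont.const_mul (exp (μ * M) * (μ * c) ^ 2)).mono (Icc_subset_Icc_left ht₀.1))
    (fun t ht => mul_nonneg (by positivity) (hobs_nonneg t ⟨ht₀.1.trans ht.1, ht.2⟩))
    fun t ht => hq.mul_integral_exp_mul_add_le hη hw hω hωΩ hμ hσ ⟨ht₀.1.trans_lt ht.1, ht.2⟩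
  have hobs_mono : ∫ t in Ioo t₀ T, ∫ x in ω, q t x ≤ ∫ t in Ioo 0 T, ∫ x in ω, q t x := by
    refine setIntegral_mono_set
      ((hobs_cont.integrableOn_compact isCompact_Icc).mono_set Ioo_subset_Icc_self) ?_
      (Ioo_subset_Ioo_left ht₀.1).eventuallyLE
    filter_upwards [ae_restrict_mem measurableSet_Ioo] with t ht using
      hobs_nonneg t (Ioo_subset_Icc_self ht)
  calc ∫ x in Ω, q T x ≤ ∫ x in Ω, exp (μ * η x) * q T x :=
        hq.integral_le_integral_exp_mul hη hμ (right_mem_Icc.2 (ht₀.1.trans ht₀.2))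
    _ ≤ exp (-(σ * (T - t₀))) * (∫ x in Ω, exp (μ * η x) * q t₀ x)
        + ∫ t in Ioo t₀ T, exp (μ * M) * (μ * c) ^ 2 * ∫ x in ω, q t x := hgronwall
    _ ≤ exp (-(σ * (T - t₀))) * (exp (μ * M) * ∫ x in Ω, q t₀ x)
        + exp (μ * M) * (μ * c) ^ 2 * ∫ t in Ioo 0 T, ∫ x in ω, q t x := by
        rw [integral_const_mul]
        gcongr
        exact hq.integral_exp_mul_le hη hw hμ ht₀
    _ = _ := by rw [← mul_assoc, ← exp_add]; ring_nf

theorem IsNeumannSolution.integral_le_exp_mul_observation (hq : IsNeumannSolution Ω η T A q)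
    (hη : IsDefiningFunction η Ω) (hw : HasWeightBounds η Ω ω c K M) (hω : MeasurableSet ω)
    (hωΩ : ω ⊆ Ω) (hμ : 0 ≤ μ) (hσ_nonneg : 0 ≤ σ) (hσ : A + σ + μ * K ≤ (μ * c) ^ 2)
    (ht₀ : t₀ ∈ Icc 0 T) (hσ_eq : σ * (T - t₀) = A * (T - t₀) + μ * M + 1) :
    ∫ x in Ω, q t₀ x
      ≤ exp (A * (T - t₀) + μ * (M + 2 * c) + 1) * ∫ t in Ioo 0 T, ∫ x in ω, q t x := by
  set I := ∫ t in Ioo 0 T, ∫ x in ω, q t x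
  have hT : T ∈ Icc 0 T := right_mem_Icc.2 (ht₀.1.trans ht₀.2)
  have hI : 0 ≤ I := setIntegral_nonneg measurableSet_Ioo fun t ht =>
    hq.setIntegral_slice_nonneg hω (hωΩ.trans subset_closure) (Ioo_subset_Icc_self ht)
  have hmass_nonneg : 0 ≤ ∫ x in Ω, q T x :=
    hq.setIntegral_slice_nonneg hη.isOpen.measurableSet subset_closure hT
  have hmass : ∫ x in Ω, q t₀ x ≤ exp (A * (T - t₀)) * ∫ x in Ω, q T x := by
    have hmono := hq.monotoneOn_exp_mul_setIntegral hη ht₀ hT ht₀.2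
    have hexp : exp (A * T) = exp (A * t₀) * exp (A * (T - t₀)) := by rw [← exp_add]; ring_nf
    simp only [hexp, mul_assoc] at hmono
    exact le_of_mul_le_mul_left hmono (exp_pos _)
  have hfinal := hq.integral_le_exp_mul_integral_add hη hw hω hωΩ hμ hσ_nonneg hσ ht₀
  have habsorb : exp (μ * M - σ * (T - t₀)) * (∫ x in Ω, q t₀ x) ≤ 1 / 2 * ∫ x in Ω, q T x := by
    calc exp (μ * M - σ * (T - t₀)) * (∫ x in Ω, q t₀ x)
        ≤ exp (μ * M - σ * (T - t₀)) * (exp (A * (T - t₀)) * ∫ x in Ω, q T x) := by gcongr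
      _ = (exp 1)⁻¹ * ∫ x in Ω, q T x := by
          rw [← mul_assoc, ← exp_add, ← exp_neg]
          congr 2
          linarith
      _ ≤ 1 / 2 * ∫ x in Ω, q T x := by
          rw [← one_div]
          gcongr
          linarith [add_one_le_exp 1]
  have hweight : 2 * (μ * c) ^ 2 ≤ exp (1 + 2 * (μ * c)) := by
    have hμc : 0 ≤ μ * c := mul_nonneg hμ hw.gradientBound_pos.le
    have hsq : exp (2 * (μ * c)) = exp (μ * c) ^ 2 := by rw [← exp_nat_mul]; norm_num
    rw [exp_add, hsq]
    gcongr
    · linarith [add_one_le_exp 1]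
    · linarith [add_one_le_exp (μ * c)]
  calc ∫ x in Ω, q t₀ x ≤ exp (A * (T - t₀)) * (exp (μ * M) * (2 * (μ * c) ^ 2) * I) := by
        refine hmass.trans ?_
        gcongr
        linarith
    _ ≤ exp (A * (T - t₀)) * (exp (μ * M) * exp (1 + 2 * (μ * c)) * I) := by gcongr
    _ = _ := by
        rw [← mul_assoc, ← exp_add, ← exp_add]
        ring_nf

theorem IsDefiningFunction.exists_integral_le_exp_mul_observation (hη : IsDefiningFunction η Ω)
    (hω : MeasurableSet ω) (hωΩ : ω ⊆ Ω) (hgrad : ∀ x ∈ closure (Ω \ ω), ∇ η x ≠ 0) :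
    ∃ C > 0, ∀ T, ∀ A ≥ 0, ∀ q : ℝ → E → ℝ, IsNeumannSolution Ω η T A q → ∀ t₀ ∈ Ico 0 T,
      ∫ x in Ω, q t₀ x ≤ exp (C * (1 + A * (T - t₀) + √A + 1 / (T - t₀)))
        * ∫ t in Ioo 0 T, ∫ x in ω, q t x := by
  obtain ⟨c, K, M, hw⟩ := hη.exists_hasWeightBounds hgrad
  obtain ⟨C, hC, hparam⟩ := hw.exists_weight_parameters
  have hc := hw.gradientBound_pos
  have hM := hw.bound_nonneg
  refine ⟨1 + C * (M + 2 * c), by positivity, fun T A hA q hq t₀ ht₀ => ?_⟩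
  have hd : 0 < T - t₀ := sub_pos.2 ht₀.2
  refine (hq.integral_le_exp_mul_observation hη hw hω hωΩ (μ := C * (1 + √A + 1 / (T - t₀)))
    (by positivity) (by positivity) (hparam A hA _ hd) ⟨ht₀.1, ht₀.2.le⟩
    (by field_simp; ring)).trans ?_
  gcongr
  · exact setIntegral_nonneg measurableSet_Ioo fun t ht =>
      hq.setIntegral_slice_nonneg hω (hωΩ.trans subset_closure) (Ioo_subset_Icc_self ht)
  · have : 0 ≤ C * (M + 2 * c) * (A * (T - t₀)) := by positivity
    have : 0 ≤ √A + 1 / (T - t₀) := by positivity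
    nlinarith

end WeightedObservability

section ClassicalSolution

variable {E : Type*} [NormedAddCommGroup E] [InnerProductSpace ℝ E]

theorem C1On.contDiff_comp {G H : Type*} [NormedAddCommGroup G] [NormedSpace ℝ G]
    [NormedAddCommGroup H] [NormedSpace ℝ H] {φ : G → H} {F : E → G} {s : Set E}
    (hφ : ContDiff ℝ 1 φ) (hF : C1On F s) : C1On (fun x => φ (F x)) s where
  differentiableAt x hx := (hφ.differentiable one_ne_zero _).comp x (hF.differentiableAt x hx)
  continuousOn_fderiv := (((hφ.continuous_fderiv one_ne_zero).comp_continuousOn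
    hF.continuousOn).clm_comp hF.continuousOn_fderiv).congr fun x hx =>
      fderiv_comp x (hφ.differentiable one_ne_zero _) (hF.differentiableAt x hx)

theorem C1On.gradient [CompleteSpace E] {u : E → ℝ} {s : Set E} (hu : C1On (fderiv ℝ u) s) :
    C1On (∇ u) s :=
  C1On.contDiff_comp (φ := (InnerProductSpace.toDual ℝ E).symm) (F := fderiv ℝ u)
    (InnerProductSpace.toDual ℝ E).symm.contDiff hu

theorem divergence_gradient_eq_sum [CompleteSpace E] {ι : Type*} [Fintype ι]
    (b : OrthonormalBasis ι ℝ E) {u : E → ℝ} {x : E} (hu : DifferentiableAt ℝ (fderiv ℝ u) x) :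
    divergence (∇ u) x = ∑ i, fderiv ℝ (fderiv ℝ u) x (b i) (b i) := by
  rw [divergence_eq_sum_inner b]
  refine Finset.sum_congr rfl fun i _ => ?_
  have hgrad : HasFDerivAt (∇ u)
      ((InnerProductSpace.toDual ℝ E).symm.toContinuousLinearEquiv.toContinuousLinearMap ∘L
        fderiv ℝ (fderiv ℝ u) x) x :=
    (InnerProductSpace.toDual ℝ E).symm.toContinuousLinearEquiv.hasFDerivAt.comp x hu.hasFDerivAt
  rw [hgrad.fderiv, real_inner_comm]
  exact InnerProductSpace.toDual_symm_apply

theorem spaceLaplacian_eq_divergence_gradient {N : ℕ} {f : EuclideanSpace ℝ (Fin N) → ℝ}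
    {x : EuclideanSpace ℝ (Fin N)} (hf : DifferentiableAt ℝ (fderiv ℝ f) x) :
    spaceLaplacian f x = divergence (∇ f) x := by
  rw [divergence_gradient_eq_sum (EuclideanSpace.basisFun (Fin N) ℝ) hf]
  refine Finset.sum_congr rfl fun i _ => ?_
  rw [(hf.hasFDerivAt.clm_apply (hasFDerivAt_const _ x)).fderiv]
  simp

theorem continuousOn_divergence_gradient [FiniteDimensional ℝ E] {w : ℝ → E → ℝ} {s : Set (ℝ × E)}
    (hdiff : ∀ p ∈ s, DifferentiableAt ℝ (fderiv ℝ (w p.1)) p.2)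
    (hcont : ContinuousOn (fun p => fderiv ℝ (fderiv ℝ (w p.1)) p.2) s) :
    ContinuousOn (fun p => divergence (∇ (w p.1)) p.2) s := by
  refine ContinuousOn.congr (f := fun p =>
    ∑ i, fderiv ℝ (fderiv ℝ (w p.1)) p.2 (stdOrthonormalBasis ℝ E i) (stdOrthonormalBasis ℝ E i))
    ?_ fun p hp => divergence_gradient_eq_sum (stdOrthonormalBasis ℝ E) (hdiff p hp)
  fun_prop

theorem le_on_of_ae_restrict_le {X : Type*} [TopologicalSpace X] [MeasurableSpace X]
    {ν : Measure X} [ν.IsOpenPosMeasure] {U : Set X} {f g : X → ℝ} (hU : IsOpen U)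
    (hf : ContinuousOn f U) (hg : ContinuousOn g U) (hle : f ≤ᵐ[ν.restrict U] g) :
    ∀ x ∈ U, f x ≤ g x := by
  have hae : (fun x => f x ⊔ g x) =ᵐ[ν.restrict U] g := by
    filter_upwards [hle] with x hx using sup_eq_right.2 hx
  exact fun x hx => sup_eq_right.1 (Measure.eqOn_open_of_ae_eq hae hU (hf.sup hg) hg hx)

theorem frontier_subset_closure_sdiff {X : Type*} [TopologicalSpace X] {U V : Set X}
    (hU : IsOpen U) (hVU : closure V ⊆ U) : frontier U ⊆ closure (U \ V) := by
  rw [hU.frontier_eq]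
  exact fun x hx => closure_mono (sdiff_subset_sdiff_right subset_closure)
    (isClosed_closure.isOpen_compl.closure_inter ⟨hx.1, fun hxV => hx.2 (hVU hxV)⟩)

theorem ae_abs_le_toReal_eLpNorm_top {X : Type*} [MeasurableSpace X] {ν : Measure X} {a : X → ℝ}
    {B : ℝ} (ha : AEStronglyMeasurable a ν) (hB : ∀ᵐ p ∂ν, |a p| ≤ B) :
    ∀ᵐ p ∂ν, |a p| ≤ (eLpNorm a ⊤ ν).toReal := by
  have hfin : eLpNormEssSup a ν ≠ ⊤ := by
    rw [← eLpNorm_exponent_top]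
    exact (memLp_top_of_bound ha B hB).2.ne
  filter_upwards [ae_le_eLpNormEssSup (f := a) (μ := ν)] with p hp
  simpa [eLpNorm_exponent_top] using ENNReal.toReal_mono hfin hp

-- The equation gives the differential inequality only almost everywhere, but both of its sides are
-- continuous.
theorem isNeumannSolution_of_ae [MeasurableSpace E] [BorelSpace E] [FiniteDimensional ℝ E]
    {Ω : Set E} {η : E → ℝ} {T A : ℝ} {a q qt : ℝ × E → ℝ} (hΩ : IsOpen Ω)
    (ha : ∀ᵐ p ∂volume.restrict (Ioo 0 T ×ˢ Ω), |a p| ≤ A)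
    (hq : ContinuousOn q (Icc 0 T ×ˢ closure Ω)) (hq_nonneg : ∀ p ∈ Icc 0 T ×ˢ closure Ω, 0 ≤ q p)
    (hqt : ∀ p ∈ Ioo 0 T ×ˢ closure Ω, HasDerivAt (fun τ => q (τ, p.2)) (qt p) p.1)
    (hqt_cont : ContinuousOn qt (Ioo 0 T ×ˢ closure Ω))
    (hdiff : ∀ p ∈ Ioo 0 T ×ˢ closure Ω, DifferentiableAt ℝ (fun z => q (p.1, z)) p.2)
    (hdiff₂ : ∀ p ∈ Ioo 0 T ×ˢ closure Ω,
      DifferentiableAt ℝ (fderiv ℝ fun z => q (p.1, z)) p.2)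
    (hfderiv : ContinuousOn (fun p : ℝ × E => fderiv ℝ (fun z => q (p.1, z)) p.2)
      (Ioo 0 T ×ˢ closure Ω))
    (hfderiv₂ : ContinuousOn (fun p : ℝ × E => fderiv ℝ (fderiv ℝ fun z => q (p.1, z)) p.2)
      (Ioo 0 T ×ˢ closure Ω))
    (heq : ∀ t ∈ Ioo 0 T, ∀ x ∈ Ω,
      -qt (t, x) - divergence (∇ fun z => q (t, z)) x + a (t, x) * q (t, x) = 0)
    (hneumann : ∀ t ∈ Ioo 0 T, ∀ x ∈ frontier Ω, ⟪∇ (fun z => q (t, z)) x, ∇ η x⟫ = 0) :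
    IsNeumannSolution Ω η T A fun t x => q (t, x) := by
  have htime : ∀ p ∈ Ioo 0 T ×ˢ closure Ω,
      timeDeriv (fun t x => q (t, x)) p.1 p.2 = qt p := fun p hp => (hqt p hp).deriv
  have hfderiv_c1 : ∀ t ∈ Ioo 0 T, C1On (fderiv ℝ fun z => q (t, z)) (closure Ω) := fun t ht =>
    ⟨fun x hx => hdiff₂ (t, x) ⟨ht, hx⟩,
      continuousOn_of_uncurry (w := fun t => fderiv ℝ (fderiv ℝ fun z => q (t, z))) hfderiv₂ ht⟩
  have hU : IsOpen (Ioo 0 T ×ˢ Ω) := isOpen_Ioo.prod hΩ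
  have hU_sub : Ioo 0 T ×ˢ Ω ⊆ Ioo 0 T ×ˢ closure Ω := prod_mono_right subset_closure
  have hU_sub' : Ioo 0 T ×ˢ Ω ⊆ Icc 0 T ×ˢ closure Ω :=
    prod_mono Ioo_subset_Icc_self subset_closure
  have hlap_cont : ContinuousOn (fun p : ℝ × E => divergence (∇ fun z => q (p.1, z)) p.2)
      (Ioo 0 T ×ˢ closure Ω) :=
    continuousOn_divergence_gradient (w := fun t z => q (t, z)) hdiff₂ hfderiv₂
  exact
    { continuousOn := hq
      nonneg := fun t ht x hx => hq_nonneg (t, x) ⟨ht, hx⟩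
      differentiableAt_time := fun t ht x hx => (hqt (t, x) ⟨ht, hx⟩).differentiableAt
      continuousOn_timeDeriv := hqt_cont.congr htime
      c1On := fun t ht => ⟨fun x hx => hdiff (t, x) ⟨ht, hx⟩,
        continuousOn_of_uncurry (w := fun t => fderiv ℝ fun z => q (t, z)) hfderiv ht⟩
      c1On_gradient := fun t ht => (hfderiv_c1 t ht).gradient
      abs_timeDeriv_add_laplacian_le := fun t ht x hx => by
        refine le_on_of_ae_restrict_le (ν := volume) hU
          (((hqt_cont.congr htime).add hlap_cont).abs.mono hU_sub) ((hq.mono hU_sub').const_mul A)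
          ?_ (t, x) ⟨ht, hx⟩
        filter_upwards [ha, ae_restrict_mem hU.measurableSet] with p hp hpU
        have hpde := heq p.1 hpU.1 p.2 hpU.2
        have hsum : timeDeriv (fun t x => q (t, x)) p.1 p.2
            + divergence (∇ fun z => q (p.1, z)) p.2 = a p * q p := by
          rw [htime p (hU_sub hpU)]
          linarith
        have hq_nonneg_p := hq_nonneg p (hU_sub' hpU)
        calc |timeDeriv (fun t x => q (t, x)) p.1 p.2 + divergence (∇ fun z => q (p.1, z)) p.2|
            = |a p| * q p := by rw [hsum, abs_mul, abs_of_nonneg hq_nonneg_p]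
          _ ≤ A * q p := by gcongr
      neumann := hneumann }

end ClassicalSolution

section Observability

variable {E : Type*} [NormedAddCommGroup E] [InnerProductSpace ℝ E] [FiniteDimensional ℝ E]
  [MeasurableSpace E] [BorelSpace E] {Ω ω : Set E} {η : E → ℝ}

theorem exponent_le_of_intermediate_time {C₁ C₂ T A τ : ℝ} (hC₁ : 0 ≤ C₁) (hC₂ : 0 ≤ C₂)
    (hT : 0 < T) (hA : 0 ≤ A) (hτ : τ = min 1 (T / 2)) :
    C₁ * (1 + 1 / τ) + 2 * (A * τ) + 2 * (C₂ * (1 + A * (T - τ) + √A + 1 / (T - τ)))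
      ≤ (2 * C₁ + 2 + 4 * C₂) * (1 + 1 / T + T * A + √A) := by
  have hτ0 : 0 < τ := by rw [hτ]; positivity
  have hτT : τ ≤ T / 2 := hτ ▸ min_le_right _ _
  have hd : T / 2 ≤ T - τ := by linarith
  have hinvτ : 1 / τ ≤ 1 + 2 * (1 / T) := by
    rcases min_choice 1 (T / 2) with h | h
    · rw [hτ, h, div_one, le_add_iff_nonneg_right]
      positivity
    · rw [hτ, h, one_div_div, ← mul_one_div]
      linarith
  have hinvd : 1 / (T - τ) ≤ 2 * (1 / T) :=
    (one_div_le_one_div_of_le (half_pos hT) hd).trans_eq (by rw [one_div_div, mul_one_div])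
  have hAτ : A * τ ≤ T * A := by rw [mul_comm T]; gcongr; linarith
  have hAd : A * (T - τ) ≤ T * A := by rw [mul_comm T]; gcongr; linarith
  have hinvT : 0 ≤ 1 / T := by positivity
  have hsqrt := sqrt_nonneg A
  calc C₁ * (1 + 1 / τ) + 2 * (A * τ) + 2 * (C₂ * (1 + A * (T - τ) + √A + 1 / (T - τ)))
      ≤ C₁ * (2 * (1 + 1 / T + T * A + √A)) + 2 * (1 + 1 / T + T * A + √A)
        + 2 * (C₂ * (2 * (1 + 1 / T + T * A + √A))) := by gcongr <;> linarith
    _ = _ := by ring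

theorem observability_L2_L1_neumann_general (hη : IsDefiningFunction η Ω) (hω : MeasurableSet ω)
    (hωΩ : ω ⊆ Ω) (hgrad : ∀ x ∈ closure (Ω \ ω), ∇ η x ≠ 0) :
    ∃ C > 0, ∀ T > 0, ∀ A ≥ 0, ∀ q : ℝ → E → ℝ, IsNeumannSolution Ω η T A q →
      ∫ x in Ω, q 0 x ^ 2
        ≤ exp (C * (1 + 1 / T + T * A + √A)) * (∫ t in Ioo 0 T, ∫ x in ω, q t x) ^ 2 := by
  obtain ⟨C₁, hC₁, hsmooth⟩ := hη.exists_integral_sq_le_exp_mul_integral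
  obtain ⟨C₂, hC₂, hobs⟩ := hη.exists_integral_le_exp_mul_observation hω hωΩ hgrad
  refine ⟨2 * C₁ + 2 + 4 * C₂, by positivity, fun T hT A hA q hq => ?_⟩
  obtain ⟨τ, hτ⟩ : ∃ τ, τ = min 1 (T / 2) := ⟨_, rfl⟩
  have hτ0 : 0 < τ := by rw [hτ]; positivity
  have hτ1 : τ ≤ 1 := hτ ▸ min_le_left _ _
  have hτT : τ < T := by linarith [hτ ▸ min_le_right 1 (T / 2)]
  have hmass_nonneg : 0 ≤ ∫ x in Ω, q τ x :=
    hq.setIntegral_slice_nonneg hη.isOpen.measurableSet subset_closure ⟨hτ0.le, hτT.le⟩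
  set I := ∫ t in Ioo 0 T, ∫ x in ω, q t x
  calc ∫ x in Ω, q 0 x ^ 2
      ≤ exp (C₁ * (1 + 1 / τ)) * (exp (A * τ) * ∫ x in Ω, q τ x) ^ 2 :=
        hsmooth T A q hq τ ⟨hτ0, hτ1⟩ hτT.le
    _ ≤ exp (C₁ * (1 + 1 / τ)) * (exp (A * τ)
        * (exp (C₂ * (1 + A * (T - τ) + √A + 1 / (T - τ))) * I)) ^ 2 := by
        gcongr
        exact hobs T A hA q hq τ ⟨hτ0.le, hτT⟩
    _ = exp (C₁ * (1 + 1 / τ) + 2 * (A * τ)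
        + 2 * (C₂ * (1 + A * (T - τ) + √A + 1 / (T - τ)))) * I ^ 2 := by
        rw [exp_add, exp_add, two_mul (A * τ), exp_add, two_mul (C₂ * _), exp_add]
        ring
    _ ≤ _ := by
        gcongr
        exact exponent_le_of_intermediate_time hC₁.le hC₂.le hT hA hτ

end Observability

end

theorem observability_L2_L1_neumann
    (N : ℕ) (hN : 1 ≤ N)
    (Ω ω₀ ω : Set (EuclideanSpace ℝ (Fin N)))
    (hΩo : IsOpen Ω) (hΩb : Bornology.IsBounded Ω) (hΩc : IsConnected Ω)
    (hω₀o : IsOpen ω₀) (hω₀ne : ω₀.Nonempty) (hωo : IsOpen ω) (hωne : ω.Nonempty)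
    (hω₀ω : closure ω₀ ⊆ ω) (hωΩ : ω ⊆ Ω)
    (η : EuclideanSpace ℝ (Fin N) → ℝ) (hη : ContDiff ℝ 2 η)
    (hηpos : ∀ x ∈ Ω, 0 < η x) (hηbd : ∀ x ∈ frontier Ω, η x = 0)
    (hηgrad : ∀ x ∈ closure (Ω \ ω₀), 0 < ‖gradient η x‖) :
    ∃ C > (0:ℝ),
      ∀ T : ℝ, 0 < T →
      ∀ a : ℝ × EuclideanSpace ℝ (Fin N) → ℝ, Measurable a →
      (∃ B : ℝ, ∀ p ∈ Set.Ioo (0:ℝ) T ×ˢ Ω, |a p| ≤ B) →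
      ∀ q qt : ℝ × EuclideanSpace ℝ (Fin N) → ℝ,
        ContinuousOn q (Set.Icc 0 T ×ˢ closure Ω) →
        (∀ p ∈ Set.Icc 0 T ×ˢ closure Ω, 0 ≤ q p) →
        (∀ p ∈ Set.Ioo 0 T ×ˢ closure Ω,
          HasDerivAt (fun τ => q (τ, p.2)) (qt p) p.1) →
        ContinuousOn qt (Set.Ioo 0 T ×ˢ closure Ω) →
        (∀ p ∈ Set.Ioo 0 T ×ˢ closure Ω,
          DifferentiableAt ℝ (fun z => q (p.1, z)) p.2) →
        (∀ p ∈ Set.Ioo 0 T ×ˢ closure Ω,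
          DifferentiableAt ℝ (fun y => fderiv ℝ (fun z => q (p.1, z)) y) p.2) →
        ContinuousOn (fun p : ℝ × EuclideanSpace ℝ (Fin N) =>
          fderiv ℝ (fun z => q (p.1, z)) p.2) (Set.Ioo 0 T ×ˢ closure Ω) →
        ContinuousOn (fun p : ℝ × EuclideanSpace ℝ (Fin N) =>
          fderiv ℝ (fun y => fderiv ℝ (fun z => q (p.1, z)) y) p.2)
          (Set.Ioo 0 T ×ˢ closure Ω) →
        (∀ t ∈ Set.Ioo (0:ℝ) T, ∀ x ∈ Ω,
          -qt (t, x) - spaceLaplacian (fun z => q (t, z)) x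
            + a (t, x) * q (t, x) = 0) →
        (∀ t ∈ Set.Ioo (0:ℝ) T, ∀ x ∈ frontier Ω,
          ⟪gradient (fun z => q (t, z)) x, gradient η x⟫ = 0) →
        (∫ x in Ω, q (0, x) ^ 2)
          ≤ Real.exp (C * (1 + 1/T + T * (eLpNorm a ⊤ (volume.restrict (Set.Ioo (0:ℝ) T ×ˢ Ω))).toReal + Real.sqrt (eLpNorm a ⊤ (volume.restrict (Set.Ioo (0:ℝ) T ×ˢ Ω))).toReal)) *
            (∫ t in Set.Ioo (0:ℝ) T, ∫ x in ω, q (t, x)) ^ 2 := by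
  have hdef : IsDefiningFunction η Ω :=
    { isOpen := hΩo
      isBounded := hΩb
      contDiff := hη
      pos := hηpos
      eq_zero := hηbd
      gradient_ne_zero := fun x hx => norm_pos_iff.1 <|
        hηgrad x (frontier_subset_closure_sdiff hΩo (hω₀ω.trans hωΩ) hx) }
  obtain ⟨C, hC, hobs⟩ := observability_L2_L1_neumann_general hdef hωo.measurableSet hωΩ
    fun x hx => norm_pos_iff.1 <|
      hηgrad x (closure_mono (sdiff_subset_sdiff_right (subset_closure.trans hω₀ω)) hx)
  refine ⟨C, hC, fun T hT a ham ⟨B, hB⟩ q qt hq hq_nonneg hqt hqt_cont hdiff hdiff₂ hfderiv hfderiv₂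
    heq hneumann => hobs T hT _ ENNReal.toReal_nonneg (fun t x => q (t, x)) ?_⟩
  refine isNeumannSolution_of_ae hΩo (ae_abs_le_toReal_eLpNorm_top (B := B)
    ham.aestronglyMeasurable ?_)
    hq hq_nonneg hqt hqt_cont hdiff hdiff₂ hfderiv hfderiv₂ (fun t ht x hx => ?_) hneumann
  · exact ae_restrict_of_forall_mem (isOpen_Ioo.prod hΩo).measurableSet hB
  · rw [← spaceLaplacian_eq_divergence_gradient (hdiff₂ (t, x) ⟨ht, subset_closure hx⟩)]
    exact heq t ht x hx
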